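/- arXiv:2507.13189 — 2 statements merged into one kernel-verified Lean document; each statement's English description precedes it below -/
import Mathlib

section
/- Let $\Omega \subset \mathcal{D}$ be an open set satisfying $\Omega \setminus \overline{\mathcal{C}} = E_0 \setminus \overline{\mathcal{C}}$, suppose $\mathcal{A}^+ := E_0 \setminus \overline{\mathcal{C}}$ is a domain of isoperimetry, and suppose there is $C > 0$ such that for every open $\tilde\omega \subset \Omega$ with $\tilde\omega \setminus \overline{\mathcal{C}} = E_0 \setminus \overline{\mathcal{C}}$ one has $|\Omega \setminus \tilde\omega| \leq C\, P(\tilde\omega, \Omega)^{N/(N-1)}$. Then $\Omega$ is a domain of isoperimetry: there is $C' > 0$ such that $\min(|\omega|, |\Omega \setminus \omega|) \leq C'\, \mathcal{H}^{N-1}(\partial\omega \cap \Omega)^{N/(N-1)}$ for all open $\omega \subset \Omega$. -/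
open MeasureTheory Metric Filter Set Bornology
open scoped ENNReal Topology NNReal RealInnerProductSpace

noncomputable section

/-- Points of Lebesgue density `1` of a set in `ℝ^N`. -/
def densityOnePts {N : ℕ} (E : Set (EuclideanSpace ℝ (Fin N))) :
    Set (EuclideanSpace ℝ (Fin N)) :=
  {x | Tendsto (fun r : ℝ => volume (E ∩ ball x r) / volume (ball x r)) (𝓝[>] 0) (𝓝 1)}

/-- Points of Lebesgue density `0` of a set in `ℝ^N`. -/
def densityZeroPts {N : ℕ} (E : Set (EuclideanSpace ℝ (Fin N))) :
    Set (EuclideanSpace ℝ (Fin N)) :=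
  {x | Tendsto (fun r : ℝ => volume (E ∩ ball x r) / volume (ball x r)) (𝓝[>] 0) (𝓝 0)}

/-- The essential boundary `∂*E`: points of density neither `0` nor `1`. -/
def essBdry {N : ℕ} (E : Set (EuclideanSpace ℝ (Fin N))) :
    Set (EuclideanSpace ℝ (Fin N)) :=
  (densityOnePts E ∪ densityZeroPts E)ᶜ

/-- Relative perimeter of `E` in `Ω` (De Giorgi–Federer):
`P(E,Ω) = H^{N-1}(∂*E ∩ Ω)`. -/
def perim {N : ℕ} (E Ω : Set (EuclideanSpace ℝ (Fin N))) : ℝ≥0∞ :=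
  μH[(N : ℝ) - 1] (essBdry E ∩ Ω)

/-- Support of the Gauss–Green measure `μ_E`, whose total variation is
`H^{N-1} ⌊ ∂*E`. -/
def sptGG {N : ℕ} (E : Set (EuclideanSpace ℝ (Fin N))) :
    Set (EuclideanSpace ℝ (Fin N)) :=
  {x | ∀ r : ℝ, 0 < r → 0 < μH[(N : ℝ) - 1] (essBdry E ∩ ball x r)}

/-- The Lebesgue volume `ω_N` of the unit ball of `ℝ^N`. -/
def omegaVol (N : ℕ) : ℝ := (volume (ball (0 : EuclideanSpace ℝ (Fin N)) 1)).toReal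

/-- A domain of isoperimetry. -/
def IsDomainOfIsoperimetry {N : ℕ} (V : Set (EuclideanSpace ℝ (Fin N))) : Prop :=
  ∃ C : ℝ, 0 < C ∧ ∀ ω : Set (EuclideanSpace ℝ (Fin N)), IsOpen ω → ω ⊆ V →
    min (volume ω) (volume (V \ ω)) ≤
      ENNReal.ofReal C * μH[(N : ℝ) - 1] (frontier ω ∩ V) ^ ((N : ℝ) / ((N : ℝ) - 1))

/-!
Let `A` be the part of `Ω` outside the closure of `C`. Replacing `ω` by `Ω \ closure ω` if
necessary, `ω` occupies at least half of `A`, so isoperimetry in `A` controls `A \ ω`. It remains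
to enlarge `ω ∪ A` to a competitor for the second hypothesis without adding much boundary along
`S = (frontier C ∩ Ω) \ closure ω`. Near a point of `S` the set `A \ ω` has positive lower density,
since the complement of a convex set fills half of every ball centred on its frontier; as `A \ ω`
has finite volume, its density must drop below a fixed small threshold between some radius `r` and
`2 * r`, and isoperimetry in `A`, applied to a good slice at an intermediate radius, forces the
frontier of `ω` to have area of order `r ^ (Q - 1)` in that ball. By the Vitali covering lemma, `S`
is covered by balls for which the sum of the `r ^ (Q - 1)`, and hence, after slicing again, the
total area of their spheres, is at most a multiple of the area of `frontier ω ∩ Ω`; by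
superadditivity of `s ↦ s ^ (Q / (Q - 1))` their total volume is controlled as well. Adding these
balls to `ω ∪ A` gives the competitor. The argument is carried out in a metric space with volume
`μH[Q]`, where upper Ahlfors regularity and exterior density of `C` stand in for Euclidean
geometry and convexity.
-/

section Slicing

theorem lintegral_tsum_indicator_closure_image_le {X : Type*} [PseudoEMetricSpace X] {d : ℝ}
    (hd : 0 ≤ d) {K : ℝ≥0} {f : X → ℝ} (hf : LipschitzWith K f) (t : ℕ → Set X) :
    ∫⁻ τ, ∑' j, (closure (f '' t j)).indicator (fun _ ↦ ediam (t j) ^ d) τ ≤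
      K * ∑' j, ediam (t j) ^ (d + 1) := by
  have hmeas (j : ℕ) : MeasurableSet (closure (f '' t j)) := isClosed_closure.measurableSet
  have volume_le (j : ℕ) : volume (closure (f '' t j)) ≤ K * ediam (t j) :=
    (Real.volume_le_diam _).trans ((ediam_closure _).trans_le (hf.ediam_image_le _))
  rw [lintegral_tsum fun j ↦ (measurable_const.indicator (hmeas j)).aemeasurable,
    ← ENNReal.tsum_mul_left]
  refine ENNReal.tsum_le_tsum fun j ↦ ?_
  calc ∫⁻ τ, (closure (f '' t j)).indicator (fun _ ↦ ediam (t j) ^ d) τ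
      = ediam (t j) ^ d * volume (closure (f '' t j)) := lintegral_indicator_const (hmeas j) _
    _ ≤ ediam (t j) ^ d * (K * ediam (t j)) := by gcongr; exact volume_le j
    _ = K * ediam (t j) ^ (d + 1) := by
      rw [ENNReal.rpow_add_of_nonneg d 1 hd zero_le_one, ENNReal.rpow_one]; ring

variable {X : Type*} [EMetricSpace X] [MeasurableSpace X] [BorelSpace X] {d : ℝ}

theorem exists_cover_tsum_ediam_rpow_le (hd : 0 < d) {E : Set X} (hE : μH[d] E ≠ ∞)
    {ε : ℝ≥0∞} (hε : 0 < ε) :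
    ∃ t : ℕ → Set X, E ⊆ ⋃ j, t j ∧ (∀ j, ediam (t j) ≤ ε) ∧
      ∑' j, ediam (t j) ^ d ≤ μH[d] E + ε := by
  have premeasure_lt : (⨅ (t : ℕ → Set X) (_ : E ⊆ ⋃ j, t j) (_ : ∀ j, ediam (t j) ≤ ε),
      ∑' j, ⨆ _ : (t j).Nonempty, ediam (t j) ^ d) < μH[d] E + ε := by
    refine lt_of_le_of_lt ?_ (ENNReal.lt_add_right hE hε.ne')
    rw [Measure.hausdorffMeasure_apply]
    exact le_iSup₂ (f := fun (r : ℝ≥0∞) (_ : 0 < r) ↦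
      ⨅ (t : ℕ → Set X) (_ : E ⊆ ⋃ j, t j) (_ : ∀ j, ediam (t j) ≤ r),
        ∑' j, ⨆ _ : (t j).Nonempty, ediam (t j) ^ d) ε hε
  simp only [iInf_lt_iff] at premeasure_lt
  obtain ⟨t, hcover, hdiam, hsum⟩ := premeasure_lt
  refine ⟨t, hcover, hdiam, (ENNReal.tsum_le_tsum fun j ↦ ?_).trans hsum.le⟩
  rcases (t j).eq_empty_or_nonempty with h | h
  · simp [h, ENNReal.zero_rpow_of_pos hd]
  · simp [h]

theorem hausdorffMeasure_inter_fiber_le_liminf (hd : 0 < d) (E : Set X) (f : X → ℝ)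
    {ε : ℕ → ℝ≥0∞} (hε : Tendsto ε atTop (𝓝 0)) {t : ℕ → ℕ → Set X}
    (hcover : ∀ n, E ⊆ ⋃ j, t n j) (hdiam : ∀ n j, ediam (t n j) ≤ ε n) (τ : ℝ) :
    μH[d] (E ∩ f ⁻¹' {τ}) ≤ liminf (fun n ↦
      ∑' j, (closure (f '' t n j)).indicator (fun _ ↦ ediam (t n j) ^ d) τ) atTop := by
  calc μH[d] (E ∩ f ⁻¹' {τ})
      ≤ liminf (fun n ↦ ∑' j, ediam (t n j ∩ f ⁻¹' {τ}) ^ d) atTop := by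
        refine Measure.hausdorffMeasure_le_liminf_tsum d _ ε hε _
          (.of_forall fun n j ↦ (ediam_mono inter_subset_left).trans (hdiam n j))
          (.of_forall fun n ↦ ?_)
        rw [← iUnion_inter]
        exact inter_subset_inter_left _ (hcover n)
    _ ≤ _ := by
        refine liminf_le_liminf (.of_forall fun n ↦ ENNReal.tsum_le_tsum fun j ↦ ?_)
        rcases (t n j ∩ f ⁻¹' {τ}).eq_empty_or_nonempty with h | ⟨y, hy, rfl⟩
        · simp [h, ENNReal.zero_rpow_of_pos hd]
        · rw [indicator_of_mem (subset_closure (mem_image_of_mem f hy))]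
          exact ENNReal.rpow_le_rpow (ediam_mono inter_subset_left) hd.le

/-- Eilenberg's inequality. The fibre measure need not be a measurable function of the level, so
the inequality is stated for a measurable majorant. -/
theorem exists_measurable_ge_hausdorffMeasure_inter_fiber (hd : 0 < d) {K : ℝ≥0} {f : X → ℝ}
    (hf : LipschitzWith K f) {E : Set X} (hE : μH[d + 1] E ≠ ∞) :
    ∃ g : ℝ → ℝ≥0∞, Measurable g ∧ (∀ τ, μH[d] (E ∩ f ⁻¹' {τ}) ≤ g τ) ∧
      ∫⁻ τ, g τ ≤ K * μH[d + 1] E := by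
  have hε : Tendsto (fun n : ℕ ↦ (n : ℝ≥0∞)⁻¹) atTop (𝓝 0) :=
    ENNReal.tendsto_inv_nat_nhds_zero
  choose t hcover hdiam hsum using fun n : ℕ ↦
    exists_cover_tsum_ediam_rpow_le (by positivity) hE
      (ENNReal.inv_pos.2 (ENNReal.natCast_ne_top n))
  let g (n : ℕ) (τ : ℝ) : ℝ≥0∞ :=
    ∑' j, (closure (f '' t n j)).indicator (fun _ ↦ ediam (t n j) ^ d) τ
  have hg (n : ℕ) : Measurable (g n) := .tsum fun j ↦
    measurable_const.indicator isClosed_closure.measurableSet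
  refine ⟨fun τ ↦ liminf (fun n ↦ g n τ) atTop, .liminf hg,
    hausdorffMeasure_inter_fiber_le_liminf hd E f hε hcover hdiam, ?_⟩
  calc ∫⁻ τ, liminf (fun n ↦ g n τ) atTop
      ≤ liminf (fun n ↦ ∫⁻ τ, g n τ) atTop := lintegral_liminf_le hg
    _ ≤ liminf (fun n : ℕ ↦ K * (μH[d + 1] E + (n : ℝ≥0∞)⁻¹)) atTop :=
        liminf_le_liminf (.of_forall fun n ↦
          (lintegral_tsum_indicator_closure_image_le hd.le hf (t n)).trans
            (by gcongr; exact hsum n))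
    _ = K * (μH[d + 1] E + 0) := Tendsto.liminf_eq
        (ENNReal.Tendsto.const_mul (tendsto_const_nhds.add hε) (.inr ENNReal.coe_ne_top))
    _ = K * μH[d + 1] E := by rw [add_zero]

end Slicing

theorem exists_hausdorffMeasure_inter_sphere_le {X : Type*} [MetricSpace X] [MeasurableSpace X]
    [BorelSpace X] {d : ℝ} (hd : 0 < d) (E : Set X) (x : X) {a b : ℝ} (hab : a < b) :
    ∃ t ∈ Ioo a b, μH[d] (E ∩ sphere x t) ≤ μH[d + 1] E / ENNReal.ofReal (b - a) := by
  by_cases hE : μH[d + 1] E = ∞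
  · obtain ⟨t, ht⟩ := exists_between hab
    refine ⟨t, ht, ?_⟩
    rw [hE, ENNReal.top_div_of_ne_top ENNReal.ofReal_ne_top]
    exact le_top
  obtain ⟨g, hg, hle, hint⟩ :=
    exists_measurable_ge_hausdorffMeasure_inter_fiber hd (LipschitzWith.dist_left x) hE
  obtain ⟨t, ht, hgt⟩ := exists_le_setLAverage (μ := volume) (s := Ioo a b) (f := g)
    (by simp [hab]) (by simp) hg.aemeasurable
  refine ⟨t, ht, (hle t).trans (hgt.trans ?_)⟩
  rw [setLAverage_eq, Real.volume_Ioo]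
  gcongr
  exact (setLIntegral_le_lintegral _ _).trans (by simpa using hint)

section Numerics

theorem ennreal_rpow_eq_rpow_sub_one_mul {q : ℝ} (hq : 1 ≤ q) (x : ℝ≥0∞) :
    x ^ q = x ^ (q - 1) * x := by
  conv_lhs => rw [← sub_add_cancel q 1]
  rw [ENNReal.rpow_add_of_nonneg _ _ (sub_nonneg.2 hq) zero_le_one, ENNReal.rpow_one]

theorem tsum_rpow_le_rpow_tsum {ι : Type*} (a : ι → ℝ≥0∞) {p : ℝ} (hp : 1 ≤ p) :
    ∑' i, a i ^ p ≤ (∑' i, a i) ^ p := by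
  simp only [ennreal_rpow_eq_rpow_sub_one_mul hp]
  rw [← ENNReal.tsum_mul_left]
  gcongr with i
  exact ENNReal.le_tsum i

theorem one_lt_div_sub_one {q : ℝ} (hq : 1 < q) : 1 < q / (q - 1) := by
  rw [one_lt_div (sub_pos.2 hq)]
  exact sub_one_lt q

theorem ennreal_rpow_sub_one_rpow {q : ℝ} (hq : 1 < q) (x : ℝ≥0∞) :
    (x ^ (q - 1)) ^ (q / (q - 1)) = x ^ q := by
  rw [← ENNReal.rpow_mul, mul_div_cancel₀ _ (sub_pos.2 hq).ne']

theorem exists_pos_le_mul_rpow_lt (K : ℝ≥0) {δ : ℝ≥0} (hδ : 0 < δ) {p : ℝ} (hp : 1 < p) :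
    ∃ θ : ℝ≥0, 0 < θ ∧ θ ≤ δ ∧ K * θ ^ p < θ := by
  have hlim : Tendsto (fun θ : ℝ≥0 ↦ K * θ ^ (p - 1)) (𝓝[>] 0) (𝓝 0) := by
    have hcont : Continuous fun θ : ℝ≥0 ↦ K * θ ^ (p - 1) :=
      continuous_const.mul (NNReal.continuous_rpow_const (by linarith))
    simpa [NNReal.zero_rpow (sub_pos.2 hp).ne'] using
      (hcont.tendsto 0).mono_left nhdsWithin_le_nhds
  obtain ⟨θ, hlt, hpos, hle⟩ :=
    ((hlim.eventually_lt_const one_pos).and (Ioc_mem_nhdsGT hδ)).exists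
  refine ⟨θ, hpos, hle, ?_⟩
  calc K * θ ^ p = K * θ ^ (p - 1) * θ := by
        rw [NNReal.rpow_sub_one hpos.ne', mul_assoc, div_mul_cancel₀ _ hpos.ne']
    _ < 1 * θ := by gcongr
    _ = θ := one_mul θ

theorem exists_ge_mul_rpow_and_double_lt {q : ℝ} (hq : 0 < q) {m : ℝ → ℝ≥0∞} {M : ℝ≥0∞}
    (hM : M ≠ ∞) (hm : ∀ r, m r ≤ M) {θ : ℝ≥0} (hθ : 0 < θ) {ρ : ℝ} (hρ : 0 < ρ)
    (hstart : θ * ENNReal.ofReal ρ ^ q ≤ m ρ) :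
    ∃ r > 0, θ * ENNReal.ofReal r ^ q ≤ m r ∧
      m (2 * r) < θ * ENNReal.ofReal (2 * r) ^ q := by
  by_contra! hdouble
  have hall (k : ℕ) : θ * ENNReal.ofReal (2 ^ k * ρ) ^ q ≤ m (2 ^ k * ρ) := by
    induction k with
    | zero => simpa using hstart
    | succ k ih =>
      rw [pow_succ', mul_assoc]
      exact hdouble _ (by positivity) ih
  have hlim : Tendsto (fun k : ℕ ↦ θ * ENNReal.ofReal (2 ^ k * ρ) ^ q) atTop (𝓝 ∞) := by
    have hscale : Tendsto (fun k : ℕ ↦ ENNReal.ofReal (2 ^ k * ρ)) atTop (𝓝 ∞) :=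
      ENNReal.tendsto_ofReal_nhds_top.2
        ((tendsto_pow_atTop_atTop_of_one_lt one_lt_two).atTop_mul_const hρ)
    have hrpow := (ENNReal.continuous_rpow_const (y := q)).tendsto ∞ |>.comp hscale
    rw [ENNReal.top_rpow_of_pos hq] at hrpow
    simpa [ENNReal.mul_top, hθ.ne'] using
      ENNReal.Tendsto.const_mul hrpow (.inl ENNReal.top_ne_zero) (a := (θ : ℝ≥0∞))
  obtain ⟨k, hk⟩ := (hlim.eventually_const_lt hM.lt_top).exists
  exact hk.not_ge ((hall k).trans (hm _))

end Numerics

section Frontier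

theorem closure_biUnion_ball_subset {X : Type*} [PseudoMetricSpace X] {u : Set X} {t : X → ℝ}
    (hfin : ∀ δ > 0, {b ∈ u | δ ≤ t b}.Finite) :
    closure (⋃ b ∈ u, ball b (t b)) ⊆ closure u ∪ ⋃ b ∈ u, closedBall b (t b) := by
  intro y hy
  by_cases hyu : y ∈ closure u
  · exact .inl hyu
  right
  obtain ⟨ε, hε, hball⟩ := Metric.isOpen_iff.1 isClosed_closure.isOpen_compl y hyu
  -- Balls of radius below `ε / 2` stay `ε / 2` away from `y`; only finitely many remain.
  have hy_large : y ∈ closure (⋃ b ∈ {b ∈ u | ε / 2 ≤ t b}, ball b (t b)) := by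
    rw [Metric.mem_closure_iff] at hy ⊢
    intro η hη
    obtain ⟨z, hz, hyz⟩ := hy (min η (ε / 2)) (by positivity)
    obtain ⟨b, hb, hzb⟩ := mem_iUnion₂.1 hz
    refine ⟨z, mem_iUnion₂.2 ⟨b, ⟨hb, ?_⟩, hzb⟩, hyz.trans_le (min_le_left _ _)⟩
    by_contra! hsmall
    refine hball (a := b) ?_ (subset_closure hb)
    rw [mem_ball, dist_comm]
    linarith [dist_triangle y z b, mem_ball.1 hzb, hyz.trans_le (min_le_right _ _)]
  rw [(hfin (ε / 2) (by positivity)).closure_biUnion] at hy_large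
  obtain ⟨b, hb, hyb⟩ := mem_iUnion₂.1 hy_large
  exact mem_iUnion₂.2 ⟨b, hb.1, closure_ball_subset_closedBall hyb⟩

theorem frontier_biUnion_ball_subset {X : Type*} [PseudoMetricSpace X] {u : Set X} {t : X → ℝ}
    (hfin : ∀ δ > 0, {b ∈ u | δ ≤ t b}.Finite) :
    frontier (⋃ b ∈ u, ball b (t b)) ⊆ closure u ∪ ⋃ b ∈ u, sphere b (t b) := by
  rw [(isOpen_biUnion fun _ _ ↦ isOpen_ball).frontier_eq]
  rintro y ⟨hy, hy_notMem⟩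
  refine (closure_biUnion_ball_subset hfin hy).imp_right fun hy_closed ↦ ?_
  obtain ⟨b, hb, hyb⟩ := mem_iUnion₂.1 hy_closed
  refine mem_iUnion₂.2 ⟨b, hb, le_antisymm hyb (not_lt.1 fun hlt ↦ ?_)⟩
  exact hy_notMem (mem_iUnion₂.2 ⟨b, hb, hlt⟩)

theorem frontier_union_exterior_union_subset {X : Type*} [TopologicalSpace X] {C Ω ω B : Set X}
    (hΩ : IsOpen Ω) (hω : IsOpen ω) (hB : IsOpen B)
    (hcover : (frontier C ∩ Ω) \ closure ω ⊆ B) :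
    frontier (ω ∪ Ω \ closure C ∪ B ∩ Ω) ∩ Ω ⊆
      frontier ω ∩ Ω ∪ frontier B \ frontier C := by
  have hopen : IsOpen (ω ∪ Ω \ closure C ∪ B ∩ Ω) :=
    (hω.union (hΩ.sdiff isClosed_closure)).union (hB.inter hΩ)
  rw [hopen.frontier_eq, hω.frontier_eq, hB.frontier_eq]
  rintro y ⟨⟨hy_closure, hy_notMem⟩, hyΩ⟩
  have hyω : y ∉ ω := fun h ↦ hy_notMem (.inl (.inl h))
  have hyB : y ∉ B := fun h ↦ hy_notMem (.inr ⟨h, hyΩ⟩)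
  by_cases hy_closure_ω : y ∈ closure ω
  · exact .inl ⟨⟨hy_closure_ω, hyω⟩, hyΩ⟩
  have hyC : y ∉ frontier C := fun h ↦ hyB (hcover ⟨⟨h, hyΩ⟩, hy_closure_ω⟩)
  have hy_closure_C : y ∈ closure C := by
    by_contra h
    exact hy_notMem (.inl (.inr ⟨hyΩ, h⟩))
  have hy_interior : y ∈ interior C := by
    by_contra h
    exact hyC ⟨hy_closure_C, h⟩
  have hy_exterior : y ∉ closure (Ω \ closure C) := fun h ↦ by
    obtain ⟨z, hz, hz_ext⟩ := mem_closure_iff.1 h _ isOpen_interior hy_interior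
    exact hz_ext.2 (subset_closure (interior_subset hz))
  rw [closure_union, closure_union] at hy_closure
  have hy_closure_B : y ∈ closure (B ∩ Ω) :=
    hy_closure.resolve_left (not_or_intro hy_closure_ω hy_exterior)
  exact .inr ⟨⟨closure_mono inter_subset_left hy_closure_B, hyB⟩, hyC⟩

end Frontier

/-- `V` satisfies the relative isoperimetric inequality of dimension `Q` with constant `K`.
Volume is the `Q`-dimensional Hausdorff measure, so the notion makes sense in any metric space;
in `ℝ^N` it agrees with `IsDomainOfIsoperimetry` up to the constant. -/
def IsIsoperimetric {X : Type*} [MetricSpace X] [MeasurableSpace X] [BorelSpace X]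
    (Q : ℝ) (K : ℝ≥0) (V : Set X) : Prop :=
  ∀ ω : Set X, IsOpen ω → ω ⊆ V →
    min (μH[Q] ω) (μH[Q] (V \ ω)) ≤ K * μH[Q - 1] (frontier ω ∩ V) ^ (Q / (Q - 1))

/-- The isoperimetric inequality for the open subsets of `Ω` that contain all of `Ω` outside
`closure C`: what such a set misses in `Ω` is controlled by its boundary in `Ω`. -/
def IsIsoperimetricRelExterior {X : Type*} [MetricSpace X] [MeasurableSpace X] [BorelSpace X]
    (Q : ℝ) (c : ℝ≥0) (C Ω : Set X) : Prop :=
  ∀ ω : Set X, IsOpen ω → ω ⊆ Ω → ω \ closure C = Ω \ closure C →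
    μH[Q] (Ω \ ω) ≤ c * μH[Q - 1] (frontier ω ∩ Ω) ^ (Q / (Q - 1))

/-- The complement of `closure C` occupies a uniform proportion of all sufficiently small balls
centred on the frontier of `C`, the volume of a ball of radius `r` being measured by `r ^ Q`. -/
def HasExteriorDensity {X : Type*} [MetricSpace X] [MeasurableSpace X] [BorelSpace X]
    (Q : ℝ) (δ : ℝ≥0) (C : Set X) : Prop :=
  ∀ x ∈ frontier C, ∀ᶠ r in 𝓝[>] (0 : ℝ),
    δ * ENNReal.ofReal r ^ Q ≤ μH[Q] (ball x r \ closure C)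

/-- Upper Ahlfors regularity of dimension `Q`, the upper half of the usual two-sided condition. -/
def IsUpperAhlforsRegular (X : Type*) [MetricSpace X] [MeasurableSpace X] [BorelSpace X]
    (Q : ℝ) (W : ℝ≥0) : Prop :=
  ∀ (x : X) (r : ℝ), μH[Q] (ball x r) ≤ W * ENNReal.ofReal r ^ Q

section DensityEstimate

variable {X : Type*} [MetricSpace X] [MeasurableSpace X] [BorelSpace X]
  {Q : ℝ} {K : ℝ≥0} {A ω : Set X}

theorem IsIsoperimetric.measure_diff_le (hA : IsOpen A) (hiso : IsIsoperimetric Q K A)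
    (hω : IsOpen ω) (hmaj : μH[Q] (A \ ω) ≤ μH[Q] (A ∩ ω)) :
    μH[Q] (A \ ω) ≤ K * μH[Q - 1] (frontier ω ∩ A) ^ (Q / (Q - 1)) := by
  have h := hiso (ω ∩ A) (hω.inter hA) inter_subset_right
  rwa [frontier_inter_open_inter hA, sdiff_inter_self_eq_sdiff, inter_comm ω A,
    min_eq_right hmaj] at h

theorem IsIsoperimetric.measure_diff_inter_closedBall_le (hQ : 1 < Q) (hA : IsOpen A)
    (hiso : IsIsoperimetric Q K A) (hω : IsOpen ω) (hmaj : μH[Q] (A \ ω) ≤ μH[Q] (A ∩ ω))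
    (x : X) (t : ℝ) :
    μH[Q] ((A \ ω) ∩ closedBall x t) ≤
      K * (μH[Q - 1] (frontier ω ∩ A ∩ closedBall x t) +
        μH[Q - 1] ((A \ ω) ∩ sphere x t)) ^ (Q / (Q - 1)) := by
  have : 0 ≤ Q / (Q - 1) := (one_lt_div_sub_one hQ).le.trans' zero_le_one
  have hdiff : A \ (ω ∪ (closedBall x t)ᶜ) = (A \ ω) ∩ closedBall x t := by
    rw [← sdiff_sdiff, sdiff_compl]
  have hfrontier : frontier (ω ∪ (closedBall x t)ᶜ) ∩ A ⊆
      (frontier ω ∩ A ∩ closedBall x t) ∪ ((A \ ω) ∩ sphere x t) := by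
    rintro y ⟨hy, hyA⟩
    rcases frontier_union_subset _ _ hy with ⟨hyω, hyt⟩ | ⟨hyω, hyt⟩
    · rw [compl_compl, closure_closedBall] at hyt
      exact .inl ⟨⟨hyω, hyA⟩, hyt⟩
    · rw [frontier_compl] at hyt
      rw [hω.isClosed_compl.closure_eq] at hyω
      exact .inr ⟨⟨hyA, hyω⟩, frontier_closedBall_subset_sphere hyt⟩
  have hmaj' : μH[Q] (A \ (ω ∪ (closedBall x t)ᶜ)) ≤ μH[Q] (A ∩ (ω ∪ (closedBall x t)ᶜ)) :=
    calc μH[Q] (A \ (ω ∪ (closedBall x t)ᶜ)) ≤ μH[Q] (A \ ω) :=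
          measure_mono (sdiff_subset_sdiff_right subset_union_left)
      _ ≤ μH[Q] (A ∩ ω) := hmaj
      _ ≤ μH[Q] (A ∩ (ω ∪ (closedBall x t)ᶜ)) :=
          measure_mono (inter_subset_inter_right _ subset_union_left)
  have h := hiso.measure_diff_le hA (hω.union isClosed_closedBall.isOpen_compl) hmaj'
  rw [hdiff] at h
  refine h.trans ?_
  gcongr
  exact (measure_mono hfrontier).trans (measure_union_le _ _)

theorem exists_hausdorffMeasure_inter_sphere_le_mul_rpow (hQ : 1 < Q) {E : Set X} {x : X} {r : ℝ}
    {θ : ℝ≥0} (hE : μH[Q] (E ∩ ball x (2 * r)) ≤ θ * ENNReal.ofReal (2 * r) ^ Q) (hr : 0 < r) :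
    ∃ t ∈ Ioo r (2 * r),
      μH[Q - 1] (E ∩ sphere x t) ≤ 2 * θ * ENNReal.ofReal (2 * r) ^ (Q - 1) := by
  obtain ⟨t, ht, hslice⟩ := exists_hausdorffMeasure_inter_sphere_le (sub_pos.2 hQ)
    (E ∩ ball x (2 * r)) x (show r < 2 * r by linarith)
  rw [sub_add_cancel, show 2 * r - r = r by ring, inter_assoc,
    inter_eq_right.2 (sphere_subset_ball ht.2)] at hslice
  refine ⟨t, ht, hslice.trans (ENNReal.div_le_of_le_mul (hE.trans_eq ?_))⟩
  rw [ennreal_rpow_eq_rpow_sub_one_mul hQ.le, ENNReal.ofReal_mul zero_le_two,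
    ENNReal.ofReal_ofNat]
  ring

/-- If `A \ ω` is dense at scale `r` but not at scale `2 * r`, a slice at an intermediate radius
is too small to account for the mass inside, so the frontier of `ω` must be large. -/
theorem IsIsoperimetric.le_measure_frontier_of_density_drop (hQ : 1 < Q) (hA : IsOpen A)
    (hiso : IsIsoperimetric Q K A) (hω : IsOpen ω) (hmaj : μH[Q] (A \ ω) ≤ μH[Q] (A ∩ ω))
    {θ : ℝ≥0} (hθ : K * 2 ^ Q * 4 ^ (Q / (Q - 1)) * θ ^ (Q / (Q - 1)) < θ)
    {x : X} {r : ℝ} (hr : 0 < r)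
    (hdense : θ * ENNReal.ofReal r ^ Q ≤ μH[Q] ((A \ ω) ∩ closedBall x r))
    (hdrop : μH[Q] ((A \ ω) ∩ closedBall x (2 * r)) < θ * ENNReal.ofReal (2 * r) ^ Q) :
    2 * θ * ENNReal.ofReal (2 * r) ^ (Q - 1) ≤
      μH[Q - 1] (frontier ω ∩ A ∩ closedBall x (2 * r)) := by
  by_contra! hfrontier
  obtain ⟨t, ht, hsphere⟩ := exists_hausdorffMeasure_inter_sphere_le_mul_rpow hQ
    ((measure_mono (inter_subset_inter_right _ ball_subset_closedBall)).trans hdrop.le) hr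
  have hp : 0 ≤ Q / (Q - 1) := (one_lt_div_sub_one hQ).le.trans' zero_le_one
  have hmass : θ * ENNReal.ofReal r ^ Q ≤
      (K * 2 ^ Q * 4 ^ (Q / (Q - 1)) * θ ^ (Q / (Q - 1)) : ℝ≥0) * ENNReal.ofReal r ^ Q := by
    calc θ * ENNReal.ofReal r ^ Q ≤ μH[Q] ((A \ ω) ∩ closedBall x r) := hdense
      _ ≤ μH[Q] ((A \ ω) ∩ closedBall x t) := by gcongr; exact ht.1.le
      _ ≤ K * (μH[Q - 1] (frontier ω ∩ A ∩ closedBall x t) +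
            μH[Q - 1] ((A \ ω) ∩ sphere x t)) ^ (Q / (Q - 1)) :=
          hiso.measure_diff_inter_closedBall_le hQ hA hω hmaj x t
      _ ≤ K * (2 * θ * ENNReal.ofReal (2 * r) ^ (Q - 1) +
            2 * θ * ENNReal.ofReal (2 * r) ^ (Q - 1)) ^ (Q / (Q - 1)) := by
          gcongr
          refine le_trans ?_ hfrontier.le
          gcongr
          exact ht.2.le
      _ = K * (4 * θ * ENNReal.ofReal (2 * r) ^ (Q - 1)) ^ (Q / (Q - 1)) := by ring_nf
      _ = (K * 2 ^ Q * 4 ^ (Q / (Q - 1)) * θ ^ (Q / (Q - 1)) : ℝ≥0) * ENNReal.ofReal r ^ Q := by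
          have hQ₀ : 0 ≤ Q := by linarith
          rw [ENNReal.mul_rpow_of_nonneg _ _ hp, ENNReal.mul_rpow_of_nonneg _ _ hp,
            ennreal_rpow_sub_one_rpow hQ, ENNReal.ofReal_mul zero_le_two, ENNReal.ofReal_ofNat,
            ENNReal.mul_rpow_of_nonneg _ _ hQ₀]
          push_cast [ENNReal.coe_rpow_of_nonneg _ hp, ENNReal.coe_rpow_of_nonneg _ hQ₀]
          ring
  have hr_rpow : 0 < ENNReal.ofReal r ^ Q :=
    ENNReal.rpow_pos (ENNReal.ofReal_pos.2 hr) ENNReal.ofReal_ne_top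
  have hr_rpow_top : ENNReal.ofReal r ^ Q ≠ ∞ :=
    ENNReal.rpow_ne_top_of_nonneg (by linarith) ENNReal.ofReal_ne_top
  rw [ENNReal.mul_le_mul_iff_left hr_rpow.ne' hr_rpow_top, ENNReal.coe_le_coe] at hmass
  exact hmass.not_gt hθ

theorem exists_forall_isIsoperimetric_exists_le_measure_frontier (hQ : 1 < Q) (K : ℝ≥0)
    {δ : ℝ≥0} (hδ : 0 < δ) :
    ∃ κ : ℝ≥0, 0 < κ ∧ ∀ A ω : Set X, IsOpen A → IsIsoperimetric Q K A → IsOpen ω →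
      μH[Q] (A \ ω) ≠ ∞ → μH[Q] (A \ ω) ≤ μH[Q] (A ∩ ω) →
      ∀ x : X, (∀ᶠ r in 𝓝[>] (0 : ℝ),
        δ * ENNReal.ofReal r ^ Q ≤ μH[Q] ((A \ ω) ∩ closedBall x r)) →
      ∃ r > 0, κ * ENNReal.ofReal r ^ (Q - 1) ≤
        μH[Q - 1] (frontier ω ∩ A ∩ closedBall x r) := by
  obtain ⟨θ, hθ, hθδ, hθ_small⟩ := exists_pos_le_mul_rpow_lt
    (K * 2 ^ Q * 4 ^ (Q / (Q - 1))) hδ (one_lt_div_sub_one hQ)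
  refine ⟨2 * θ, by positivity, fun A ω hA hiso hω hfin hmaj x hdense ↦ ?_⟩
  obtain ⟨ρ, hρ_dense, hρ⟩ := (hdense.and self_mem_nhdsWithin).exists
  obtain ⟨r, hr, hr_dense, hr_drop⟩ := exists_ge_mul_rpow_and_double_lt (zero_lt_one.trans hQ)
    (m := fun r ↦ μH[Q] ((A \ ω) ∩ closedBall x r)) hfin
    (fun r ↦ measure_mono inter_subset_left) hθ hρ (hρ_dense.trans' (by gcongr))
  refine ⟨2 * r, by positivity, ?_⟩
  rw [ENNReal.coe_mul, ENNReal.coe_ofNat]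
  exact hiso.le_measure_frontier_of_density_drop hQ hA hω hmaj hθ_small hr hr_dense hr_drop

end DensityEstimate

section Covering

theorem exists_countable_cover_closedBall_mul_tsum_rpow_le {X : Type*} [PseudoMetricSpace X]
    [MeasurableSpace X] [OpensMeasurableSpace X] {d : ℝ} (hd : 0 < d) (ν : Measure X)
    [IsFiniteMeasure ν] {κ : ℝ≥0} (hκ : 0 < κ) {S : Set X} {r : X → ℝ} (hr : ∀ x ∈ S, 0 < r x)
    (hν : ∀ x ∈ S, κ * ENNReal.ofReal (r x) ^ d ≤ ν (closedBall x (r x))) :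
    ∃ u ⊆ S, u.Countable ∧ S ⊆ ⋃ b ∈ u, closedBall b (5 * r b) ∧
      κ * ∑' b : u, ENNReal.ofReal (r b) ^ d ≤ ν univ := by
  have hκ₀ : (κ : ℝ≥0∞) ≠ 0 := by exact_mod_cast hκ.ne'
  have hbound_top : (ν univ / κ) ^ d⁻¹ ≠ ∞ :=
    ENNReal.rpow_ne_top_of_nonneg (by positivity)
      (ENNReal.div_ne_top (measure_ne_top ν univ) hκ₀)
  have hbound (x : X) (hx : x ∈ S) : r x ≤ ((ν univ / κ) ^ d⁻¹).toReal := by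
    rw [← ENNReal.ofReal_le_iff_le_toReal hbound_top, ENNReal.le_rpow_inv_iff hd,
      ENNReal.le_div_iff_mul_le (.inl hκ₀) (.inl ENNReal.coe_ne_top), mul_comm]
    exact (hν x hx).trans (measure_mono (subset_univ _))
  obtain ⟨u, huS, hdisj, hcover⟩ :=
    Vitali.exists_disjoint_subfamily_covering_enlargement_closedBall S id r _ hbound 5
      (by norm_num)
  have hsum : κ * ∑' b : u, ENNReal.ofReal (r b) ^ d ≤ ν univ := by
    rw [← ENNReal.tsum_mul_left]
    calc ∑' b : u, κ * ENNReal.ofReal (r b) ^ d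
        ≤ ∑' b : u, ν (closedBall (b : X) (r b)) := ENNReal.tsum_le_tsum fun b ↦ hν b (huS b.2)
      _ ≤ ν (⋃ b : u, closedBall (b : X) (r b)) :=
          tsum_meas_le_meas_iUnion_of_disjoint ν (fun _ ↦ measurableSet_closedBall)
            (hdisj.subtype _ _)
      _ ≤ ν univ := measure_mono (subset_univ _)
  have hcount : u.Countable := by
    have hsum_top : ∑' b : u, ENNReal.ofReal (r b) ^ d ≠ ∞ := fun h ↦ by
      rw [h, ENNReal.mul_top hκ₀] at hsum
      exact measure_ne_top ν univ (top_le_iff.1 hsum)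
    have hsupport : Function.support (fun b : u ↦ ENNReal.ofReal (r b) ^ d) = univ :=
      eq_univ_of_forall fun b ↦ (ENNReal.rpow_pos (ENNReal.ofReal_pos.2 (hr b (huS b.2)))
        ENNReal.ofReal_ne_top).ne'
    rw [← countable_coe_iff, ← countable_univ_iff, ← hsupport]
    exact Summable.countable_support_ennreal hsum_top
  refine ⟨u, huS, hcount, fun x hx ↦ ?_, hsum⟩
  obtain ⟨b, hb, hsub⟩ := hcover x hx
  exact mem_iUnion₂.2 ⟨b, hb, hsub (mem_closedBall_self (hr x hx).le)⟩

theorem finite_setOf_le_of_tsum_ofReal_rpow_ne_top {X : Type*} {d : ℝ} (hd : 0 ≤ d) {u : Set X}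
    {t : X → ℝ} (hsum : ∑' b : u, ENNReal.ofReal (t b) ^ d ≠ ∞) {δ : ℝ} (hδ : 0 < δ) :
    {b ∈ u | δ ≤ t b}.Finite := by
  have hfin : {b : u | ENNReal.ofReal δ ^ d ≤ ENNReal.ofReal (t b) ^ d}.Finite :=
    ENNReal.finite_const_le_of_tsum_ne_top hsum
      (ENNReal.rpow_pos (ENNReal.ofReal_pos.2 hδ) ENNReal.ofReal_ne_top).ne'
  refine (hfin.image Subtype.val).subset ?_
  rintro b ⟨hb, hδb⟩
  exact ⟨⟨b, hb⟩, ENNReal.rpow_le_rpow (ENNReal.ofReal_le_ofReal hδb) hd, rfl⟩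

variable {X : Type*} [MetricSpace X] [MeasurableSpace X] [BorelSpace X] {Q : ℝ} {W : ℝ≥0}

theorem IsUpperAhlforsRegular.exists_hausdorffMeasure_sphere_le (hQ : 1 < Q)
    (hX : IsUpperAhlforsRegular X Q W) (x : X) {r : ℝ} (hr : 0 < r) :
    ∃ t ∈ Ioo r (2 * r),
      μH[Q - 1] (sphere x t) ≤ (2 ^ Q * W : ℝ≥0) * ENNReal.ofReal t ^ (Q - 1) := by
  obtain ⟨t, ht, hsphere⟩ := exists_hausdorffMeasure_inter_sphere_le_mul_rpow hQ (E := univ)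
    (by simpa only [univ_inter] using hX x (2 * r)) hr
  refine ⟨t, ht, ?_⟩
  have hQ₁ : 0 ≤ Q - 1 := by linarith
  calc μH[Q - 1] (sphere x t) ≤ 2 * W * ENNReal.ofReal (2 * r) ^ (Q - 1) := by
        simpa only [univ_inter] using hsphere
    _ ≤ 2 * W * ENNReal.ofReal (2 * t) ^ (Q - 1) := by gcongr; exact ht.1.le
    _ = (2 ^ Q * W : ℝ≥0) * ENNReal.ofReal t ^ (Q - 1) := by
        rw [ENNReal.ofReal_mul zero_le_two, ENNReal.ofReal_ofNat,
          ENNReal.mul_rpow_of_nonneg _ _ hQ₁]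
        push_cast [ENNReal.coe_rpow_of_nonneg _ (zero_le_one.trans hQ.le)]
        rw [ennreal_rpow_eq_rpow_sub_one_mul hQ.le 2]
        ring

theorem IsUpperAhlforsRegular.hausdorffMeasure_biUnion_ball_le (hQ : 1 < Q)
    (hX : IsUpperAhlforsRegular X Q W) {u : Set X} (hu : u.Countable) (t : X → ℝ) :
    μH[Q] (⋃ b ∈ u, ball b (t b)) ≤
      W * (∑' b : u, ENNReal.ofReal (t b) ^ (Q - 1)) ^ (Q / (Q - 1)) := by
  calc μH[Q] (⋃ b ∈ u, ball b (t b)) ≤ ∑' b : u, μH[Q] (ball (b : X) (t b)) :=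
        measure_biUnion_le _ hu _
    _ ≤ ∑' b : u, W * (ENNReal.ofReal (t b) ^ (Q - 1)) ^ (Q / (Q - 1)) := by
        gcongr with b
        rw [ennreal_rpow_sub_one_rpow hQ]
        exact hX b (t b)
    _ ≤ W * (∑' b : u, ENNReal.ofReal (t b) ^ (Q - 1)) ^ (Q / (Q - 1)) := by
        rw [ENNReal.tsum_mul_left]
        gcongr
        exact tsum_rpow_le_rpow_tsum _ (one_lt_div_sub_one hQ).le

theorem hausdorffMeasure_frontier_biUnion_ball_diff_closure_le {d : ℝ} (hd : 0 ≤ d) {u : Set X}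
    (hu : u.Countable) {t : X → ℝ} {a : ℝ≥0}
    (hsphere : ∀ b ∈ u, μH[d] (sphere b (t b)) ≤ a * ENNReal.ofReal (t b) ^ d)
    (hsum : ∑' b : u, ENNReal.ofReal (t b) ^ d ≠ ∞) :
    μH[d] (frontier (⋃ b ∈ u, ball b (t b)) \ closure u) ≤
      a * ∑' b : u, ENNReal.ofReal (t b) ^ d := by
  have hsub : frontier (⋃ b ∈ u, ball b (t b)) \ closure u ⊆ ⋃ b ∈ u, sphere b (t b) :=
    sdiff_subset_iff.2 <| frontier_biUnion_ball_subset fun _ hδ ↦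
      finite_setOf_le_of_tsum_ofReal_rpow_ne_top hd hsum hδ
  rw [← ENNReal.tsum_mul_left]
  exact (measure_mono hsub).trans ((measure_biUnion_le _ hu _).trans
    (ENNReal.tsum_le_tsum fun b ↦ hsphere b b.2))

theorem IsUpperAhlforsRegular.exists_isOpen_superset (hQ : 1 < Q)
    (hX : IsUpperAhlforsRegular X Q W) (ν : Measure X) [IsFiniteMeasure ν] {κ : ℝ≥0} (hκ : 0 < κ)
    {S : Set X} (hS : ∀ x ∈ S, ∃ r > 0, κ * ENNReal.ofReal r ^ (Q - 1) ≤ ν (closedBall x r)) :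
    ∃ B, IsOpen B ∧ S ⊆ B ∧
      μH[Q] B ≤ W * ((10 ^ (Q - 1) / κ : ℝ≥0) * ν univ) ^ (Q / (Q - 1)) ∧
      μH[Q - 1] (frontier B \ closure S) ≤
        (2 ^ Q * W : ℝ≥0) * ((10 ^ (Q - 1) / κ : ℝ≥0) * ν univ) := by
  have hQ₁ : 0 < Q - 1 := sub_pos.2 hQ
  have : 0 ≤ Q / (Q - 1) := (one_lt_div_sub_one hQ).le.trans' zero_le_one
  choose! r hr hν using hS
  obtain ⟨u, huS, hu, hcover, hsum_r⟩ :=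
    exists_countable_cover_closedBall_mul_tsum_rpow_le hQ₁ ν hκ hr hν
  have hr5 (b : X) (hb : b ∈ u) : 0 < 5 * r b := mul_pos (by norm_num) (hr b (huS hb))
  choose! t ht hsphere using fun b hb ↦ hX.exists_hausdorffMeasure_sphere_le hQ b (hr5 b hb)
  have hsum_t : ∑' b : u, ENNReal.ofReal (t b) ^ (Q - 1) ≤
      (10 ^ (Q - 1) / κ : ℝ≥0) * ν univ := by
    calc ∑' b : u, ENNReal.ofReal (t b) ^ (Q - 1)
        ≤ ∑' b : u, 10 ^ (Q - 1) * ENNReal.ofReal (r b) ^ (Q - 1) := by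
          gcongr with b
          rw [← ENNReal.mul_rpow_of_nonneg _ _ hQ₁.le, ← ENNReal.ofReal_ofNat 10,
            ← ENNReal.ofReal_mul (by norm_num)]
          gcongr
          linarith [(ht b b.2).2]
      _ = (10 ^ (Q - 1) / κ : ℝ≥0) * (κ * ∑' b : u, ENNReal.ofReal (r b) ^ (Q - 1)) := by
          rw [ENNReal.tsum_mul_left, ← mul_assoc, ← ENNReal.coe_mul, div_mul_cancel₀ _ hκ.ne',
            ENNReal.coe_rpow_of_nonneg _ hQ₁.le, ENNReal.coe_ofNat]
      _ ≤ (10 ^ (Q - 1) / κ : ℝ≥0) * ν univ := by gcongr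
  refine ⟨⋃ b ∈ u, ball b (t b), isOpen_biUnion fun _ _ ↦ isOpen_ball, ?_, ?_, ?_⟩
  · exact hcover.trans (iUnion₂_mono fun b hb ↦ closedBall_subset_ball (ht b hb).1)
  · exact (hX.hausdorffMeasure_biUnion_ball_le hQ hu t).trans (by gcongr)
  · have hsum_top := ne_top_of_le_ne_top
      (ENNReal.mul_ne_top ENNReal.coe_ne_top (measure_ne_top ν univ)) hsum_t
    calc _ ≤ μH[Q - 1] (frontier (⋃ b ∈ u, ball b (t b)) \ closure u) := by gcongr
      _ ≤ _ := hausdorffMeasure_frontier_biUnion_ball_diff_closure_le hQ₁.le hu hsphere hsum_top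
      _ ≤ _ := by gcongr

end Covering

section Filling

theorem measure_inter_closure_le_of_measure_inter_le {X : Type*} [TopologicalSpace X]
    [MeasurableSpace X] {μ : Measure X} {A ω : Set X} (hnull : μ (frontier ω ∩ A) = 0)
    (hmin : μ (A ∩ ω) ≤ μ (A \ ω)) : μ (A ∩ closure ω) ≤ μ (A \ closure ω) := by
  have hinter : A ∩ closure ω ⊆ A ∩ ω ∪ frontier ω ∩ A := by
    rw [closure_eq_self_union_frontier]
    grind
  have hdiff : A \ ω ⊆ A \ closure ω ∪ frontier ω ∩ A := by
    rw [closure_eq_self_union_frontier]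
    grind
  calc μ (A ∩ closure ω) ≤ μ (A ∩ ω) + μ (frontier ω ∩ A) :=
        (measure_mono hinter).trans (measure_union_le _ _)
    _ ≤ μ (A \ ω) + 0 := by gcongr; exact hnull.le
    _ ≤ μ (A \ closure ω) + μ (frontier ω ∩ A) := by
        rw [add_zero]
        exact (measure_mono hdiff).trans (measure_union_le _ _)
    _ = μ (A \ closure ω) := by rw [hnull, add_zero]

variable {X : Type*} [MetricSpace X] [MeasurableSpace X] [BorelSpace X]
  {Q : ℝ} {W K c δ : ℝ≥0} {C Ω ω : Set X}

theorem HasExteriorDensity.eventually_le_measure_diff (hC : HasExteriorDensity Q δ C)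
    (hΩ : IsOpen Ω) {x : X} (hx : x ∈ (frontier C ∩ Ω) \ closure ω) :
    ∀ᶠ r in 𝓝[>] (0 : ℝ), δ * ENNReal.ofReal r ^ Q ≤
      μH[Q] (((Ω \ closure C) \ ω) ∩ closedBall x r) := by
  obtain ⟨ε, hε, hball⟩ := Metric.isOpen_iff.1 (hΩ.sdiff isClosed_closure) x ⟨hx.1.2, hx.2⟩
  filter_upwards [hC x hx.1.1, Ioo_mem_nhdsGT hε] with r hdense hr
  refine hdense.trans (measure_mono fun y hy ↦ ?_)
  obtain ⟨hyΩ, hyω⟩ := hball (ball_subset_ball hr.2.le hy.1)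
  exact ⟨⟨⟨hyΩ, hy.2⟩, notMem_subset subset_closure hyω⟩, ball_subset_closedBall hy.1⟩

theorem IsIsoperimetricRelExterior.measure_diff_le_of_cover (hQ : 1 < Q)
    (hrel : IsIsoperimetricRelExterior Q c C Ω) (hΩ : IsOpen Ω) (hω : IsOpen ω) (hωΩ : ω ⊆ Ω)
    {B : Set X} (hB : IsOpen B) (hcover : (frontier C ∩ Ω) \ closure ω ⊆ B) :
    μH[Q] (Ω \ ω) ≤ μH[Q] ((Ω \ closure C) \ ω) +
      c * (μH[Q - 1] (frontier ω ∩ Ω) + μH[Q - 1] (frontier B \ frontier C)) ^ (Q / (Q - 1)) +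
      μH[Q] B := by
  have : 0 ≤ Q / (Q - 1) := (one_lt_div_sub_one hQ).le.trans' zero_le_one
  set filled := ω ∪ Ω \ closure C ∪ B ∩ Ω
  have hfilled_exterior : filled \ closure C = Ω \ closure C := by grind
  have hmissing : μH[Q] (Ω \ filled) ≤
      c * (μH[Q - 1] (frontier ω ∩ Ω) + μH[Q - 1] (frontier B \ frontier C)) ^ (Q / (Q - 1)) := by
    refine (hrel filled ((hω.union (hΩ.sdiff isClosed_closure)).union (hB.inter hΩ))
      (by grind) hfilled_exterior).trans ?_
    gcongr
    exact (measure_mono (frontier_union_exterior_union_subset hΩ hω hB hcover)).trans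
      (measure_union_le _ _)
  calc μH[Q] (Ω \ ω) ≤ μH[Q] ((Ω \ closure C) \ ω ∪ Ω \ filled ∪ B) := measure_mono (by grind)
    _ ≤ μH[Q] ((Ω \ closure C) \ ω) + μH[Q] (Ω \ filled) + μH[Q] B :=
        (measure_union_le _ _).trans (by gcongr; exact measure_union_le _ _)
    _ ≤ _ := by gcongr

theorem IsUpperAhlforsRegular.exists_isOpen_cover_frontier_diff_closure (hQ : 1 < Q)
    (hX : IsUpperAhlforsRegular X Q W) (hδ : 0 < δ) (hC : HasExteriorDensity Q δ C)
    (hΩ : IsOpen Ω) (hA : IsIsoperimetric Q K (Ω \ closure C)) :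
    ∃ Λ : ℝ≥0, ∀ ω : Set X, IsOpen ω → μH[Q - 1] (frontier ω ∩ Ω) ≠ ∞ →
      μH[Q] ((Ω \ closure C) \ ω) ≤ μH[Q] ((Ω \ closure C) ∩ ω) →
      ∃ B, IsOpen B ∧ (frontier C ∩ Ω) \ closure ω ⊆ B ∧
        μH[Q] B ≤ W * (Λ * μH[Q - 1] (frontier ω ∩ Ω)) ^ (Q / (Q - 1)) ∧
        μH[Q - 1] (frontier B \ frontier C) ≤
          (2 ^ Q * W : ℝ≥0) * (Λ * μH[Q - 1] (frontier ω ∩ Ω)) := by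
  have hA_open : IsOpen (Ω \ closure C) := hΩ.sdiff isClosed_closure
  have hp : 0 ≤ Q / (Q - 1) := (one_lt_div_sub_one hQ).le.trans' zero_le_one
  obtain ⟨κ, hκ, hscale⟩ :=
    exists_forall_isIsoperimetric_exists_le_measure_frontier (X := X) hQ K hδ
  refine ⟨10 ^ (Q - 1) / κ, fun ω hω hfin hmaj ↦ ?_⟩
  have hle : μH[Q - 1] (frontier ω ∩ (Ω \ closure C)) ≤ μH[Q - 1] (frontier ω ∩ Ω) :=
    measure_mono (inter_subset_inter_right _ sdiff_subset)
  have hfin_A := ne_top_of_le_ne_top hfin hle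
  have hdiff_fin : μH[Q] ((Ω \ closure C) \ ω) ≠ ∞ :=
    ne_top_of_le_ne_top (ENNReal.mul_ne_top ENNReal.coe_ne_top
      (ENNReal.rpow_ne_top_of_nonneg hp hfin_A)) (hA.measure_diff_le hA_open hω hmaj)
  let ν := μH[Q - 1].restrict (frontier ω ∩ (Ω \ closure C))
  have : IsFiniteMeasure ν := isFiniteMeasure_restrict.2 hfin_A
  have hν_univ : ν univ ≤ μH[Q - 1] (frontier ω ∩ Ω) := by
    rwa [Measure.restrict_apply_univ]
  obtain ⟨B, hB, hcover, hvol, hfrontier⟩ := hX.exists_isOpen_superset hQ ν hκ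
    (S := (frontier C ∩ Ω) \ closure ω) fun x hx ↦ by
      simpa only [ν, Measure.restrict_apply measurableSet_closedBall, inter_comm] using
        hscale _ ω hA_open hA hω hdiff_fin hmaj x (hC.eventually_le_measure_diff hΩ hx)
  have hclosure : closure ((frontier C ∩ Ω) \ closure ω) ⊆ frontier C :=
    closure_minimal (sdiff_subset.trans inter_subset_left) isClosed_frontier
  refine ⟨B, hB, hcover, hvol.trans (by gcongr), ?_⟩
  calc μH[Q - 1] (frontier B \ frontier C)
      ≤ μH[Q - 1] (frontier B \ closure ((frontier C ∩ Ω) \ closure ω)) := by gcongr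
    _ ≤ _ := hfrontier
    _ ≤ _ := by gcongr

theorem IsIsoperimetricRelExterior.exists_measure_diff_le_of_majority (hQ : 1 < Q)
    (hX : IsUpperAhlforsRegular X Q W) (hδ : 0 < δ) (hC : HasExteriorDensity Q δ C)
    (hΩ : IsOpen Ω) (hA : IsIsoperimetric Q K (Ω \ closure C))
    (hrel : IsIsoperimetricRelExterior Q c C Ω) :
    ∃ K' : ℝ≥0, ∀ ω : Set X, IsOpen ω → ω ⊆ Ω → μH[Q - 1] (frontier ω ∩ Ω) ≠ ∞ →
      μH[Q] ((Ω \ closure C) \ ω) ≤ μH[Q] ((Ω \ closure C) ∩ ω) →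
      μH[Q] (Ω \ ω) ≤ K' * μH[Q - 1] (frontier ω ∩ Ω) ^ (Q / (Q - 1)) := by
  have hp : 0 ≤ Q / (Q - 1) := (one_lt_div_sub_one hQ).le.trans' zero_le_one
  obtain ⟨Λ, hfill⟩ := hX.exists_isOpen_cover_frontier_diff_closure hQ hδ hC hΩ hA
  refine ⟨K + c * (1 + 2 ^ Q * W * Λ) ^ (Q / (Q - 1)) + W * Λ ^ (Q / (Q - 1)),
    fun ω hω hωΩ hfin hmaj ↦ ?_⟩
  obtain ⟨B, hB, hcover, hvol, hfrontier⟩ := hfill ω hω hfin hmaj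
  have hexterior : μH[Q] ((Ω \ closure C) \ ω) ≤
      K * μH[Q - 1] (frontier ω ∩ Ω) ^ (Q / (Q - 1)) := by
    refine (hA.measure_diff_le (hΩ.sdiff isClosed_closure) hω hmaj).trans ?_
    gcongr
    exact sdiff_subset
  calc μH[Q] (Ω \ ω)
      ≤ μH[Q] ((Ω \ closure C) \ ω) + c * (μH[Q - 1] (frontier ω ∩ Ω) +
          μH[Q - 1] (frontier B \ frontier C)) ^ (Q / (Q - 1)) + μH[Q] B :=
        hrel.measure_diff_le_of_cover hQ hΩ hω hωΩ hB hcover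
    _ ≤ K * μH[Q - 1] (frontier ω ∩ Ω) ^ (Q / (Q - 1)) + c * (μH[Q - 1] (frontier ω ∩ Ω) +
          (2 ^ Q * W : ℝ≥0) * (Λ * μH[Q - 1] (frontier ω ∩ Ω))) ^ (Q / (Q - 1)) +
          W * (Λ * μH[Q - 1] (frontier ω ∩ Ω)) ^ (Q / (Q - 1)) := by gcongr
    _ = _ := by
        rw [show μH[Q - 1] (frontier ω ∩ Ω) +
              (2 ^ Q * W : ℝ≥0) * (Λ * μH[Q - 1] (frontier ω ∩ Ω)) =
            (1 + 2 ^ Q * W * Λ : ℝ≥0) * μH[Q - 1] (frontier ω ∩ Ω) by push_cast; ring,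
          ENNReal.mul_rpow_of_nonneg _ _ hp, ENNReal.mul_rpow_of_nonneg _ _ hp,
          ← ENNReal.coe_rpow_of_nonneg _ hp, ← ENNReal.coe_rpow_of_nonneg _ hp]
        push_cast
        ring

theorem stmt_14_general (hQ : 1 < Q) (hX : IsUpperAhlforsRegular X Q W) (hδ : 0 < δ)
    (hC : HasExteriorDensity Q δ C) (hΩ : IsOpen Ω) (hA : IsIsoperimetric Q K (Ω \ closure C))
    (hrel : IsIsoperimetricRelExterior Q c C Ω) : ∃ K' : ℝ≥0, IsIsoperimetric Q K' Ω := by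
  have hp : 0 < Q / (Q - 1) := (one_lt_div_sub_one hQ).trans' zero_lt_one
  obtain ⟨K', hK'⟩ := hrel.exists_measure_diff_le_of_majority hQ hX hδ hC hΩ hA
  refine ⟨K' + 1, fun ω hω hωΩ ↦ ?_⟩
  by_cases hfin : μH[Q - 1] (frontier ω ∩ Ω) = ∞
  · simp [hfin, ENNReal.top_rpow_of_pos hp]
  refine le_trans ?_ (mul_le_mul_left (ENNReal.coe_le_coe.2 le_self_add) _)
  rcases le_total (μH[Q] ((Ω \ closure C) \ ω)) (μH[Q] ((Ω \ closure C) ∩ ω)) with hmaj | hmin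
  · exact (min_le_right _ _).trans (hK' ω hω hωΩ hfin hmaj)
  have hfrontier : frontier (Ω \ closure ω) ∩ Ω ⊆ frontier ω ∩ Ω := by
    rw [sdiff_eq, inter_comm Ω, frontier_inter_open_inter hΩ, frontier_compl]
    exact inter_subset_inter_left _ frontier_closure_subset
  have hnull : μH[Q] (frontier ω ∩ (Ω \ closure C)) = 0 := by
    refine measure_mono_null (inter_subset_inter_right _ sdiff_subset)
      ((Measure.hausdorffMeasure_zero_or_top (sub_one_lt Q) _).resolve_right hfin)
  have hmaj := measure_inter_closure_le_of_measure_inter_le hnull hmin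
  have hmaj' : μH[Q] ((Ω \ closure C) \ (Ω \ closure ω)) ≤
      μH[Q] ((Ω \ closure C) ∩ (Ω \ closure ω)) := by
    convert hmaj using 2 <;> grind
  calc min (μH[Q] ω) (μH[Q] (Ω \ ω)) ≤ μH[Q] (Ω \ (Ω \ closure ω)) :=
        (min_le_left _ _).trans (measure_mono (by grind [subset_closure (s := ω)]))
    _ ≤ K' * μH[Q - 1] (frontier (Ω \ closure ω) ∩ Ω) ^ (Q / (Q - 1)) :=
        hK' _ (hΩ.sdiff isClosed_closure) sdiff_subset
          (ne_top_of_le_ne_top hfin (measure_mono hfrontier)) hmaj'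
    _ ≤ K' * μH[Q - 1] (frontier ω ∩ Ω) ^ (Q / (Q - 1)) := by gcongr

end Filling

section NormedSpace

theorem reflection_mem_ball_diff_closure {E : Type*} [NormedAddCommGroup E]
    [NormedSpace ℝ E] {C : Set E} (hC : Convex ℝ C) {x y : E} {r : ℝ} (hx : x ∉ interior C)
    (hy : y ∈ ball x r ∩ interior C) :
    x + x - y ∈ ball x r \ closure C := by
  refine ⟨?_, fun hmem ↦ hx ?_⟩
  · rw [mem_ball_iff_norm, show x + x - y - x = x - y by abel, ← mem_ball_iff_norm']
    exact hy.1
  · have hmid := hC.combo_interior_closure_mem_interior hy.2 hmem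
      (show (0 : ℝ) < 1 / 2 by norm_num) (show (0 : ℝ) ≤ 1 / 2 by norm_num) (by norm_num)
    rwa [← smul_add, add_sub_cancel, ← two_smul ℝ x, smul_smul, one_div,
      inv_mul_cancel₀ two_ne_zero, one_smul] at hmid

variable {E : Type*} [NormedAddCommGroup E] [NormedSpace ℝ E] [FiniteDimensional ℝ E]
  [MeasurableSpace E] [BorelSpace E]

theorem addHaar_ball_eq_toNNReal_mul_rpow (μ : Measure E) [μ.IsAddHaarMeasure] (x : E) {r : ℝ}
    (hr : 0 < r) :
    μ (ball x r) =
      (μ (ball 0 1)).toNNReal * ENNReal.ofReal r ^ (Module.finrank ℝ E : ℝ) := by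
  rw [Measure.addHaar_ball_of_pos μ x hr, ENNReal.coe_toNNReal measure_ball_lt_top.ne, mul_comm,
    ENNReal.rpow_natCast, ENNReal.ofReal_pow hr.le]

theorem isUpperAhlforsRegular_finrank :
    IsUpperAhlforsRegular E (Module.finrank ℝ E)
      (μH[Module.finrank ℝ E] (ball (0 : E) 1)).toNNReal := by
  intro x r
  rcases le_or_gt r 0 with hr | hr
  · rw [ball_eq_empty.2 hr, measure_empty]
    exact zero_le
  · exact (addHaar_ball_eq_toNNReal_mul_rpow _ x hr).le

theorem addHaar_ball_le_two_mul_diff_closure (μ : Measure E) [μ.IsAddHaarMeasure] {C : Set E}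
    (hC : Convex ℝ C) {x : E} (hx : x ∈ frontier C) (r : ℝ) :
    μ (ball x r) ≤ 2 * μ (ball x r \ closure C) := by
  have hreflect : μ (ball x r ∩ interior C) ≤ μ (ball x r \ closure C) := by
    rw [← (Measure.measurePreserving_sub_left μ (x + x)).measure_preimage
      (measurableSet_ball.diff isClosed_closure.measurableSet).nullMeasurableSet]
    exact measure_mono fun y hy ↦ reflection_mem_ball_diff_closure hC hx.2 hy
  have hcover : ball x r ⊆ ball x r ∩ interior C ∪ frontier C ∪ ball x r \ closure C := by
    grind [frontier]
  calc μ (ball x r) ≤ μ (ball x r ∩ interior C) + μ (frontier C) + μ (ball x r \ closure C) :=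
        (measure_mono hcover).trans
          ((measure_union_le _ _).trans (by gcongr; exact measure_union_le _ _))
    _ ≤ 2 * μ (ball x r \ closure C) := by
        rw [hC.addHaar_frontier μ, add_zero, two_mul]
        gcongr

theorem exists_hasExteriorDensity_of_convex {C : Set E} (hC : Convex ℝ C) :
    ∃ δ : ℝ≥0, 0 < δ ∧ HasExteriorDensity (Module.finrank ℝ E) δ C := by
  have hunit : 0 < (μH[Module.finrank ℝ E] (ball (0 : E) 1)).toNNReal :=
    ENNReal.toNNReal_pos (measure_ball_pos _ _ one_pos).ne' measure_ball_lt_top.ne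
  refine ⟨(μH[Module.finrank ℝ E] (ball (0 : E) 1)).toNNReal / 2, half_pos hunit, fun x hx ↦ ?_⟩
  filter_upwards [self_mem_nhdsWithin] with r hr
  have hhalf := addHaar_ball_le_two_mul_diff_closure μH[Module.finrank ℝ E] hC hx r
  rw [addHaar_ball_eq_toNNReal_mul_rpow _ x hr] at hhalf
  rw [ENNReal.coe_div two_ne_zero, ENNReal.coe_ofNat, ← ENNReal.mul_div_right_comm]
  exact ENNReal.div_le_of_le_mul' hhalf

end NormedSpace

section Euclidean

variable {N : ℕ}

theorem exists_volume_eq_smul_hausdorffMeasure (N : ℕ) :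
    ∃ k : ℝ≥0, k ≠ 0 ∧ (volume : Measure (EuclideanSpace ℝ (Fin N))) = k • μH[N] := by
  have : (μH[N] : Measure (EuclideanSpace ℝ (Fin N))).IsAddHaarMeasure := by
    simpa only [finrank_euclideanSpace_fin] using
      isAddHaarMeasure_hausdorffMeasure (E := EuclideanSpace ℝ (Fin N))
  exact ⟨_, (Measure.addHaarScalarFactor_pos_of_isAddHaarMeasure volume μH[N]).ne',
    Measure.isAddLeftInvariant_eq_smul volume μH[N]⟩

theorem isDomainOfIsoperimetry_iff {V : Set (EuclideanSpace ℝ (Fin N))} :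
    IsDomainOfIsoperimetry V ↔ ∃ K : ℝ≥0, IsIsoperimetric N K V := by
  obtain ⟨k, hk, hvol⟩ := exists_volume_eq_smul_hausdorffMeasure N
  have hk' : (k : ℝ≥0∞) ≠ 0 := ENNReal.coe_ne_zero.2 hk
  have hscale (ω : Set (EuclideanSpace ℝ (Fin N))) :
      min (volume ω) (volume (V \ ω)) = k * min (μH[N] ω) (μH[N] (V \ ω)) := by
    simp only [hvol, Measure.smul_apply, ENNReal.smul_def, smul_eq_mul, mul_min]
  simp only [IsDomainOfIsoperimetry, IsIsoperimetric, hscale]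
  constructor
  · rintro ⟨c, -, h⟩
    refine ⟨c.toNNReal / k, fun ω hω hωV ↦ ?_⟩
    rw [ENNReal.coe_div hk, ← ENNReal.mul_div_right_comm,
      ENNReal.le_div_iff_mul_le (.inl hk') (.inl ENNReal.coe_ne_top), mul_comm]
    exact h ω hω hωV
  · rintro ⟨K, h⟩
    refine ⟨k * K + 1, by positivity, fun ω hω hωV ↦ ?_⟩
    calc k * min (μH[N] ω) (μH[N] (V \ ω))
        ≤ k * (K * μH[N - 1] (frontier ω ∩ V) ^ ((N : ℝ) / (N - 1))) := by
          gcongr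
          exact h ω hω hωV
      _ = ENNReal.ofReal (k * K) * μH[N - 1] (frontier ω ∩ V) ^ ((N : ℝ) / (N - 1)) := by
          rw [← mul_assoc, ← NNReal.coe_mul, ENNReal.ofReal_coe_nnreal, ENNReal.coe_mul]
      _ ≤ _ := by
          gcongr
          exact le_add_of_nonneg_right zero_le_one

theorem mem_densityOnePts_of_mem_interior {E : Set (EuclideanSpace ℝ (Fin N))}
    {x : EuclideanSpace ℝ (Fin N)} (hx : x ∈ interior E) : x ∈ densityOnePts E := by
  obtain ⟨ε, hε, hball⟩ := Metric.isOpen_iff.1 isOpen_interior x hx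
  refine tendsto_const_nhds.congr' ?_
  filter_upwards [Ioo_mem_nhdsGT hε] with r hr
  have hsub : ball x r ⊆ E := ((ball_subset_ball hr.2.le).trans hball).trans interior_subset
  rw [inter_eq_right.2 hsub,
    ENNReal.div_self (measure_ball_pos _ _ hr.1).ne' measure_ball_lt_top.ne]

theorem mem_densityZeroPts_of_notMem_closure {E : Set (EuclideanSpace ℝ (Fin N))}
    {x : EuclideanSpace ℝ (Fin N)} (hx : x ∉ closure E) : x ∈ densityZeroPts E := by
  obtain ⟨ε, hε, hball⟩ := Metric.isOpen_iff.1 isClosed_closure.isOpen_compl x hx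
  refine tendsto_const_nhds.congr' ?_
  filter_upwards [Ioo_mem_nhdsGT hε] with r hr
  have hdisj : E ∩ ball x r = ∅ := disjoint_iff_inter_eq_empty.1 <|
    disjoint_left.2 fun y hyE hy ↦ hball (ball_subset_ball hr.2.le hy) (subset_closure hyE)
  rw [hdisj, measure_empty, ENNReal.zero_div]

theorem essBdry_subset_frontier (E : Set (EuclideanSpace ℝ (Fin N))) : essBdry E ⊆ frontier E := by
  rw [essBdry, compl_subset_comm]
  intro x hx
  rcases not_and_or.1 hx with hclosure | hinterior
  · exact .inr (mem_densityZeroPts_of_notMem_closure hclosure)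
  · exact .inl (mem_densityOnePts_of_mem_interior (not_not.1 hinterior))

theorem perim_le_hausdorffMeasure_frontier_inter (E Ω : Set (EuclideanSpace ℝ (Fin N))) :
    perim E Ω ≤ μH[N - 1] (frontier E ∩ Ω) :=
  measure_mono (inter_subset_inter_left _ (essBdry_subset_frontier E))

theorem exists_isIsoperimetricRelExterior_of_volume_diff_le_perim (hN : 1 ≤ N)
    {C Ω : Set (EuclideanSpace ℝ (Fin N))} {c : ℝ}
    (hiso : ∀ ω : Set (EuclideanSpace ℝ (Fin N)), IsOpen ω → ω ⊆ Ω →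
      ω \ closure C = Ω \ closure C →
      volume (Ω \ ω) ≤ ENNReal.ofReal c * perim ω Ω ^ ((N : ℝ) / ((N : ℝ) - 1))) :
    ∃ c' : ℝ≥0, IsIsoperimetricRelExterior N c' C Ω := by
  obtain ⟨k, hk, hvol⟩ := exists_volume_eq_smul_hausdorffMeasure N
  have hk' : (k : ℝ≥0∞) ≠ 0 := ENNReal.coe_ne_zero.2 hk
  have : (1 : ℝ) ≤ N := by exact_mod_cast hN
  have : 0 ≤ (N : ℝ) / (N - 1) := div_nonneg (by positivity) (by linarith)
  refine ⟨c.toNNReal / k, fun ω hω hωΩ hexterior ↦ ?_⟩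
  rw [ENNReal.coe_div hk, ← ENNReal.mul_div_right_comm,
    ENNReal.le_div_iff_mul_le (.inl hk') (.inl ENNReal.coe_ne_top), mul_comm]
  calc k * μH[N] (Ω \ ω) = volume (Ω \ ω) := by
        rw [hvol, Measure.smul_apply, ENNReal.smul_def, smul_eq_mul]
    _ ≤ ENNReal.ofReal c * perim ω Ω ^ ((N : ℝ) / (N - 1)) := hiso ω hω hωΩ hexterior
    _ ≤ ENNReal.ofReal c * μH[N - 1] (frontier ω ∩ Ω) ^ ((N : ℝ) / (N - 1)) := by
        gcongr
        exact perim_le_hausdorffMeasure_frontier_inter ω Ω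

end Euclidean

theorem stmt_14 {N : ℕ} (hN : 2 ≤ N) (D C E0 Om : Set (EuclideanSpace ℝ (Fin N)))
    (hD : IsOpen D) (hDb : IsBounded D) (hC : IsOpen C) (hCconv : Convex ℝ C) (hCD : C ⊆ D)
    (hOmopen : IsOpen Om) (hOmD : Om ⊆ D) (hbc : Om \ closure C = E0 \ closure C)
    (hAplus : IsDomainOfIsoperimetry (E0 \ closure C))
    (c : ℝ) (hc : 0 < c)
    (hiso : ∀ ωt : Set (EuclideanSpace ℝ (Fin N)), IsOpen ωt → ωt ⊆ Om →
      ωt \ closure C = E0 \ closure C →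
      volume (Om \ ωt) ≤ ENNReal.ofReal c * perim ωt Om ^ ((N : ℝ) / ((N : ℝ) - 1))) :
    IsDomainOfIsoperimetry Om := by
  simp only [← hbc] at hAplus hiso
  obtain ⟨K, hA⟩ := isDomainOfIsoperimetry_iff.1 hAplus
  obtain ⟨c', hrel⟩ := exists_isIsoperimetricRelExterior_of_volume_diff_le_perim (by lia) hiso
  have hregular := isUpperAhlforsRegular_finrank (E := EuclideanSpace ℝ (Fin N))
  obtain ⟨δ, hδ, hdensity⟩ := exists_hasExteriorDensity_of_convex hCconv
  rw [finrank_euclideanSpace_fin] at hregular hdensity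
  exact isDomainOfIsoperimetry_iff.2
    (stmt_14_general (by exact_mod_cast hN) hregular hδ hdensity hOmopen hA hrel)

end
end

section
/- Let $\phi: G \to F$ be a bi-Lipschitz bijection between subsets of $\mathbb{R}^N$ (with $\phi$ and $\phi^{-1}$ both Lipschitz) and let $A \subset\subset G$ be a set of finite perimeter. Then $\partial^*\phi(A) = \phi(\partial^* A)$, i.e., bi-Lipschitz maps carry the essential boundary to the essential boundary. -/
open MeasureTheory Metric Filter Set Bornology
open scoped ENNReal Topology NNReal RealInnerProductSpace

noncomputable section

/-!
A Lipschitz map changes volumes by at most a constant factor, so points of density `0` of `A` are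
carried to points of density `0` of `φ(A)`. At a point `x` of density `1` one has to exclude that
`φ(A)` leaves a hole near `φ(x)` which is not the image of anything. Extend `φ` and `ψ = φ⁻¹` to
Lipschitz maps `Φ` and `Ψ` of the whole space. Every point of a small ball around `x` is close to
`A` at the scale of that ball, so `Ψ ∘ Φ` is close to the identity there, and a degree argument
shows that `Φ` covers a ball around `φ(x)`. Hence near `φ(x)` the complement of `φ(A)` lies in the
`Φ`-image of the complement of `A`, which has density `0`.

The degree argument rests on the volume proof of the no-retraction theorem (Milnor, Rogers): if `g`
is Lipschitz and vanishes outside a ball `U`, then `∫_U det (1 + t Dg)` is a polynomial in `t` which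
equals the volume of `U` for small `t`, because `id + t g` is then a bijection of `U`; so it equals
that volume at `t = 1`, whereas it would vanish if `id + g` mapped `U` into a sphere.
-/

section HaarMeasure

variable {E : Type*} [NormedAddCommGroup E] [NormedSpace ℝ E] [FiniteDimensional ℝ E]
  [MeasurableSpace E] [BorelSpace E] (μ : Measure E) [μ.IsAddHaarMeasure]

theorem addHaar_image_le_of_lipschitzOnWith {K : ℝ≥0} {f : E → E} {s : Set E}
    (hf : LipschitzOnWith K f s) : μ (f '' s) ≤ (K : ℝ≥0∞) ^ Module.finrank ℝ E * μ s := by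
  have hμH := hf.hausdorffMeasure_image_le (d := Module.finrank ℝ E) (by positivity)
  rw [ENNReal.rpow_natCast] at hμH
  rw [μ.isAddLeftInvariant_eq_smul μH[Module.finrank ℝ E]]
  simp only [Measure.smul_apply]
  grw [hμH, mul_smul_comm]

theorem addHaar_image_eq_zero_of_lipschitzOnWith {K : ℝ≥0} {f : E → E} {s : Set E}
    (hf : LipschitzOnWith K f s) (hs : μ s = 0) : μ (f '' s) = 0 := by
  simpa [hs] using addHaar_image_le_of_lipschitzOnWith μ hf

end HaarMeasure

section NullLagrangian

variable {E : Type*} [NormedAddCommGroup E]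

theorem bijective_self_add_of_lipschitzWith [CompleteSpace E] {g : E → E} {K : ℝ≥0}
    (hg : LipschitzWith K g) (hK : K < 1) : Function.Bijective fun x => x + g x := by
  constructor
  · exact (AntilipschitzWith.id.add_lipschitzWith hg (by simpa using hK)).injective
  · intro y
    have hcontr : ContractingWith K fun z => y - g z :=
      ⟨hK, by simpa using (LipschitzWith.const y).sub hg⟩
    exact ⟨hcontr.fixedPoint, eq_sub_iff_add_eq.1 hcontr.fixedPoint_isFixedPt.symm⟩

variable [NormedSpace ℝ E] [FiniteDimensional ℝ E]

theorem det_one_add_pos_of_norm_lt_one {M : E →L[ℝ] E} (hM : ‖M‖ < 1) : 0 < (1 + M).det := by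
  have hne (t : ℝ) (ht : t ∈ Icc (0 : ℝ) 1) : (1 + t • M).det ≠ 0 := by
    have hnorm : ‖-(t • M)‖ < 1 := by
      rw [norm_neg, norm_smul, Real.norm_of_nonneg ht.1]
      exact (mul_le_of_le_one_left (norm_nonneg M) ht.2).trans_lt hM
    have hunit : IsUnit (1 + t • M) := by simpa using isUnit_one_sub_of_norm_lt_one hnorm
    exact ((LinearMap.isUnit_iff_isUnit_det _).1
      (hunit.map ContinuousLinearMap.toLinearMapRingHom)).ne_zero
  have hcont : Continuous fun t : ℝ => (1 + t • M).det :=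
    ContinuousLinearMap.continuous_det.comp (by fun_prop)
  by_contra! hle
  obtain ⟨t, ht, hdet⟩ := intermediate_value_Icc' zero_le_one hcont.continuousOn
    (show (0 : ℝ) ∈ Icc (1 + (1 : ℝ) • M).det (1 + (0 : ℝ) • M).det from
      ⟨by simpa using hle, by simp [ContinuousLinearMap.det]⟩)
  exact hne t ht hdet

theorem exists_polynomial_eval_eq_det_one_add_smul (M : E →L[ℝ] E) :
    ∃ p : Polynomial ℝ, p.natDegree ≤ Module.finrank ℝ E ∧
      ∀ t : ℝ, p.eval t = (1 + t • M).det := by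
  let b := Module.finBasis ℝ E
  let A := LinearMap.toMatrix b b (M : E →ₗ[ℝ] E)
  refine ⟨_, (Polynomial.natDegree_det_X_add_C_le A 1).trans_eq (Fintype.card_fin _), fun t => ?_⟩
  rw [← Polynomial.coe_evalRingHom, RingHom.map_det, ContinuousLinearMap.det,
    ← LinearMap.det_toMatrix b]
  congr 1
  ext i j
  simp [A, Matrix.one_apply, LinearMap.toMatrix_apply, apply_ite, Finsupp.single_apply, eq_comm,
    add_comm, mul_comm t]

theorem det_one_add_eq_sum_lagrange (s : Finset ℝ) (hs : Module.finrank ℝ E < s.card)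
    (M : E →L[ℝ] E) :
    (1 + M).det = ∑ t ∈ s, (Lagrange.basis s id t).eval 1 * (1 + t • M).det := by
  obtain ⟨p, hdeg, hp⟩ := exists_polynomial_eval_eq_det_one_add_smul M
  have hinterp : p = Lagrange.interpolate s id fun t => p.eval t :=
    Lagrange.eq_interpolate (injOn_id _)
      ((Polynomial.degree_le_of_natDegree_le hdeg).trans_lt (by exact_mod_cast hs))
  have heval := congrArg (Polynomial.eval 1) hinterp
  simpa [Lagrange.interpolate_apply, Polynomial.eval_finsetSum, hp, mul_comm] using heval

variable [MeasurableSpace E] [BorelSpace E] (μ : Measure E) [μ.IsAddHaarMeasure]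
  {g : E → E} {K : ℝ≥0} {U : Set E}

theorem setIntegral_det_one_add_fderiv_of_lt_one (hg : LipschitzWith K g) (hK : K < 1)
    (hU : MeasurableSet U) (hμU : μ U ≠ ∞) (hgU : ∀ x ∉ U, g x = 0) :
    IntegrableOn (fun x => (1 + fderiv ℝ g x).det) U μ ∧
      ∫ x in U, (1 + fderiv ℝ g x).det ∂μ = μ.real U := by
  let f : E → E := fun x => x + g x
  let D : Set E := {x | DifferentiableAt ℝ g x}
  have hf : Function.Bijective f := bijective_self_add_of_lipschitzWith hg hK
  have hDU : (U ∩ D : Set E) =ᵐ[μ] U :=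
    inter_ae_eq_left_of_ae_eq_univ (eventuallyEq_univ.2 hg.ae_differentiableAt)
  have himage : f '' U = U := by
    refine compl_injective ?_
    rw [← image_compl_eq hf, image_congr (g := id) fun x hx => by simp [f, hgU x hx], image_id]
  have himageD : (f '' (U ∩ D) : Set E) =ᵐ[μ] U := by
    have hnull : μ (f '' (U \ D)) = 0 :=
      addHaar_image_eq_zero_of_lipschitzOnWith μ (LipschitzWith.id.add hg).lipschitzOnWith
        (measure_mono_null (fun x hx => hx.2) hg.ae_differentiableAt)
    conv_rhs => rw [← himage, ← inter_union_sdiff U D, image_union]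
    exact (union_ae_eq_left_of_ae_eq_empty (ae_eq_empty.2 hnull)).symm
  have hUD : MeasurableSet (U ∩ D) := hU.inter (measurableSet_of_differentiableAt ℝ g)
  have hderiv : ∀ x ∈ U ∩ D, HasFDerivWithinAt f (1 + fderiv ℝ g x) (U ∩ D) x := fun x hx =>
    ((hasFDerivAt_id x).add hx.2.hasFDerivAt).hasFDerivWithinAt
  have habs (x : E) : |(1 + fderiv ℝ g x).det| = (1 + fderiv ℝ g x).det :=
    abs_of_pos <| det_one_add_pos_of_norm_lt_one <|
      (norm_fderiv_le_of_lipschitz ℝ hg).trans_lt (by exact_mod_cast hK)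
  have hintegrable := integrableOn_image_iff_integrableOn_abs_det_fderiv_smul μ hUD hderiv
    hf.injective.injOn fun _ => (1 : ℝ)
  have hintegral := integral_image_eq_integral_abs_det_fderiv_smul μ hUD hderiv
    hf.injective.injOn fun _ => (1 : ℝ)
  simp only [habs, smul_eq_mul, mul_one] at hintegrable hintegral
  rw [integrableOn_congr_set_ae himageD, integrableOn_congr_set_ae hDU] at hintegrable
  rw [setIntegral_congr_set himageD, setIntegral_congr_set hDU] at hintegral
  exact ⟨hintegrable.1 (integrableOn_const hμU), by simp [← hintegral]⟩

theorem setIntegral_det_one_add_fderiv (hg : LipschitzWith K g) (hU : MeasurableSet U)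
    (hμU : μ U ≠ ∞) (hgU : ∀ x ∉ U, g x = 0) :
    ∫ x in U, (1 + fderiv ℝ g x).det ∂μ = μ.real U := by
  have hsmall : {t : ℝ | ‖t‖₊ * K < 1} ∈ 𝓝 0 :=
    (continuous_nnnorm.mul continuous_const).continuousAt.eventually_lt_const (by simp)
  obtain ⟨s, hs, hcard⟩ := (infinite_of_mem_nhds 0 hsmall).exists_subset_card_eq
    (Module.finrank ℝ E + 1)
  have hsmul (t : ℝ) (ht : t ∈ s) := setIntegral_det_one_add_fderiv_of_lt_one μ
    ((lipschitzWith_smul t).comp hg) (hs ht) hU hμU fun x hx => by simp [hgU x hx]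
  have hfderiv (t : ℝ) (x : E) : fderiv ℝ ((t • ·) ∘ g) x = t • fderiv ℝ g x :=
    congrFun (fderiv_const_smul_field t) x
  simp only [hfderiv] at hsmul
  have hweights : ∑ t ∈ s, (Lagrange.basis s id t).eval 1 = 1 := by
    rw [← Polynomial.eval_finsetSum, Lagrange.sum_basis (injOn_id _)
      (Finset.card_pos.1 (by lia)), Polynomial.eval_one]
  have hfinrank : Module.finrank ℝ E < s.card := by lia
  calc ∫ x in U, (1 + fderiv ℝ g x).det ∂μ
      = ∫ x in U, ∑ t ∈ s, (Lagrange.basis s id t).eval 1 * (1 + t • fderiv ℝ g x).det ∂μ := by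
        simp only [← det_one_add_eq_sum_lagrange s hfinrank]
    _ = ∑ t ∈ s, (Lagrange.basis s id t).eval 1 * μ.real U := by
        rw [integral_finsetSum s fun t ht => (hsmul t ht).1.const_mul _]
        exact Finset.sum_congr rfl fun t ht => by rw [integral_const_mul, (hsmul t ht).2]
    _ = μ.real U := by rw [← Finset.sum_mul, hweights, one_mul]

end NullLagrangian

section LocallyLipschitz

theorem locallyLipschitz_inv_of_ne_zero {X : Type*} [PseudoEMetricSpace X] {f : X → ℝ}
    (hf : LocallyLipschitz f) (hne : ∀ x, f x ≠ 0) : LocallyLipschitz fun x => (f x)⁻¹ := by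
  intro x
  obtain ⟨Kinv, t, ht, hinv⟩ := (contDiffAt_inv ℝ (hne x)).exists_lipschitzOnWith
  obtain ⟨Kf, u, hu, hfu⟩ := hf x
  exact ⟨Kinv * Kf, u ∩ f ⁻¹' t, inter_mem hu (hf.continuous.continuousAt ht),
    hinv.comp (hfu.mono inter_subset_left) fun _ hy => hy.2⟩

theorem locallyLipschitz_smul {X E : Type*} [PseudoEMetricSpace X] [NormedAddCommGroup E]
    [NormedSpace ℝ E] {c : X → ℝ} {f : X → E} (hc : LocallyLipschitz c)
    (hf : LocallyLipschitz f) : LocallyLipschitz fun x => c x • f x :=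
  (contDiff_smul (𝕜 := ℝ) (n := 1)).locallyLipschitz.comp (hc.prodMk hf)

theorem locallyLipschitz_inv_max_norm {E : Type*} [NormedAddCommGroup E] {m : ℝ}
    (hm : 0 < m) : LocallyLipschitz fun y : E => (max m ‖y‖)⁻¹ :=
  locallyLipschitz_inv_of_ne_zero (lipschitzWith_one_norm.locallyLipschitz.const_max m)
    fun _ => (lt_max_of_lt_left hm).ne'

theorem locallyLipschitz_const_mul {X : Type*} [PseudoEMetricSpace X] {f : X → ℝ}
    (hf : LocallyLipschitz f) (c : ℝ) : LocallyLipschitz fun x => c * f x :=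
  (lipschitzWith_smul c).locallyLipschitz.comp hf

theorem exists_lipschitzWith_of_hasCompactSupport {X E : Type*} [PseudoMetricSpace X]
    [ProperSpace X] [NormedAddCommGroup E] {f : X → E} (hf : LocallyLipschitz f)
    (hsupp : HasCompactSupport f) : ∃ K, LipschitzWith K f := by
  obtain ⟨K, hK⟩ := hf.locallyLipschitzOn.exists_lipschitzOnWith_of_compact hsupp.cthickening
    (s := cthickening 1 (tsupport f))
  obtain ⟨C, hC⟩ := hsupp.exists_bound_of_continuous hf.continuous
  have hCnonneg (x : X) : 0 ≤ C := (norm_nonneg _).trans (hC x)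
  have hnear (x y : X) (hx : f x ≠ 0) (hxy : dist x y ≤ 1) : dist (f x) (f y) ≤ K * dist x y := by
    have hxs : x ∈ tsupport f := subset_tsupport f hx
    exact hK.dist_le_mul x (self_subset_cthickening _ hxs) y
      (mem_cthickening_of_dist_le y x 1 _ hxs (by rwa [dist_comm]))
  refine ⟨K + (2 * C).toNNReal, LipschitzWith.of_dist_le_mul fun x y => ?_⟩
  have hC2 : ((2 * C).toNNReal : ℝ) = 2 * C := Real.coe_toNNReal _ (by linarith [hCnonneg x])
  rw [NNReal.coe_add, hC2, add_mul]
  have hfar : 0 ≤ 2 * C * dist x y := mul_nonneg (by linarith [hCnonneg x]) dist_nonneg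
  rcases le_total (dist x y) 1 with hxy | hxy
  · rcases ne_or_eq (f x) 0 with hx | hx
    · linarith [hnear x y hx hxy]
    · rcases ne_or_eq (f y) 0 with hy | hy
      · rw [dist_comm x y] at hxy hfar ⊢
        rw [dist_comm (f x)]
        linarith [hnear y x hy hxy]
      · rw [hx, hy, dist_self]; positivity
  · have hbound : dist (f x) (f y) ≤ 2 * C := by
      rw [dist_eq_norm, two_mul]
      exact (norm_sub_le _ _).trans (add_le_add (hC x) (hC y))
    have hmul : 2 * C ≤ 2 * C * dist x y := le_mul_of_one_le_right (by linarith [hCnonneg x]) hxy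
    linarith [mul_nonneg K.coe_nonneg (dist_nonneg (x := x) (y := y))]

end LocallyLipschitz

section RadialMaps

variable {E : Type*} [NormedAddCommGroup E] [NormedSpace ℝ E]

/-- The radial map that pushes the points of `ball p R` at distance at least `m` from `p` onto
`sphere p R` and fixes the points outside `ball p R`. The factor is truncated at distance `m` so
that the map is locally Lipschitz on the whole space. -/
def pushOut (p : E) (m R : ℝ) (y : E) : E :=
  p + max 1 (R * (max m ‖y - p‖)⁻¹) • (y - p)

/-- The radial retraction of the space onto `closedBall 0 R`. -/
def ballRetraction (R : ℝ) (v : E) : E :=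
  (R * (max R ‖v‖)⁻¹) • v

theorem locallyLipschitz_pushOut (p : E) {m : ℝ} (hm : 0 < m) (R : ℝ) :
    LocallyLipschitz (pushOut p m R) := by
  have hsub : LocallyLipschitz fun y : E => y - p := LocallyLipschitz.id.sub (.const p)
  have hfactor : LocallyLipschitz fun y : E => max 1 (R * (max m ‖y - p‖)⁻¹) :=
    ((locallyLipschitz_const_mul (locallyLipschitz_inv_max_norm hm) R).comp hsub).const_max 1
  exact (LocallyLipschitz.const p).add (locallyLipschitz_smul hfactor hsub)

theorem pushOut_of_le {p y : E} {m R : ℝ} (hR : 0 < R) (hy : R ≤ ‖y - p‖) :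
    pushOut p m R y = y := by
  have hfactor : R * (max m ‖y - p‖)⁻¹ ≤ 1 :=
    mul_inv_le_one_of_le₀ (hy.trans (le_max_right _ _)) (hR.le.trans (hy.trans (le_max_right _ _)))
  rw [pushOut, max_eq_left hfactor, one_smul, add_sub_cancel]

theorem norm_pushOut_sub {p y : E} {m R : ℝ} (hm : 0 < m) (hmy : m ≤ ‖y - p‖)
    (hy : ‖y - p‖ ≤ R) : ‖pushOut p m R y - p‖ = R := by
  have hpos : 0 < ‖y - p‖ := hm.trans_le hmy
  have hfactor : 1 ≤ R * ‖y - p‖⁻¹ := by rwa [← div_eq_mul_inv, one_le_div hpos]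
  rw [pushOut, max_eq_right hmy, max_eq_right hfactor, add_sub_cancel_left, norm_smul,
    Real.norm_of_nonneg (by linarith), inv_mul_cancel_right₀ hpos.ne']

theorem norm_pushOut_sub_self_le {p y : E} {m R : ℝ} (hm : 0 < m) (hR : 0 ≤ R) :
    ‖pushOut p m R y - y‖ ≤ R := by
  have hle : (max m ‖y - p‖)⁻¹ * ‖y - p‖ ≤ 1 :=
    inv_mul_le_one_of_le₀ (le_max_right _ _) (hm.le.trans (le_max_left _ _))
  have hsub : pushOut p m R y - y = (max 1 (R * (max m ‖y - p‖)⁻¹) - 1) • (y - p) := by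
    rw [pushOut, sub_smul, one_smul]; abel
  rw [hsub, norm_smul, Real.norm_of_nonneg (by simp)]
  rcases max_cases 1 (R * (max m ‖y - p‖)⁻¹) with ⟨h, -⟩ | ⟨h, -⟩
  · simpa [h] using hR
  · rw [h]; nlinarith [norm_nonneg (y - p)]

theorem locallyLipschitz_ballRetraction {R : ℝ} (hR : 0 < R) :
    LocallyLipschitz (ballRetraction R : E → E) :=
  locallyLipschitz_smul (locallyLipschitz_const_mul (locallyLipschitz_inv_max_norm hR) R) .id

theorem norm_ballRetraction_le {R : ℝ} (hR : 0 < R) (v : E) : ‖ballRetraction R v‖ ≤ R := by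
  have hle : (max R ‖v‖)⁻¹ * ‖v‖ ≤ 1 :=
    inv_mul_le_one_of_le₀ (le_max_right _ _) (hR.le.trans (le_max_left _ _))
  rw [ballRetraction, norm_smul, Real.norm_of_nonneg (by positivity), mul_assoc]
  exact mul_le_of_le_one_right hR.le hle

theorem ballRetraction_of_norm_le {R : ℝ} (hR : 0 < R) {v : E} (hv : ‖v‖ ≤ R) :
    ballRetraction R v = v := by
  rw [ballRetraction, max_eq_left hv, mul_inv_cancel₀ hR.ne', one_smul]

end RadialMaps

section Covering

variable {E : Type*} [NormedAddCommGroup E] [NormedSpace ℝ E] [FiniteDimensional ℝ E]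

theorem exists_pos_forall_le_norm_sub {X F : Type*} [TopologicalSpace X]
    [NormedAddCommGroup F] {f : X → F} {s : Set X} {p : F}
    (hf : Continuous f) (hs : IsCompact s) (hp : p ∉ f '' s) :
    ∃ m > 0, ∀ z ∈ s, m ≤ ‖f z - p‖ := by
  obtain ⟨m, hm, hball⟩ := Metric.mem_nhds_iff.1 ((hs.image hf).isClosed.isOpen_compl.mem_nhds hp)
  refine ⟨m, hm, fun z hz => ?_⟩
  rw [← dist_eq_norm]
  exact not_lt.1 fun hlt => hball hlt (mem_image_of_mem f hz)

theorem det_eq_zero_of_isLocalMax_norm {f : E → E} {f' : E →L[ℝ] E} {x : E}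
    (hf : HasFDerivAt f f' x) (hmax : IsLocalMax (fun z => ‖f z‖) x) (hne : f x ≠ 0) :
    f'.det = 0 := by
  obtain ⟨ℓ, hℓ, hℓx⟩ := exists_dual_vector ℝ (f x) (norm_ne_zero_iff.2 hne)
  have hℓle (y : E) : ℓ y ≤ ‖y‖ := by
    simpa [hℓ] using (le_abs_self _).trans (ℓ.le_opNorm y)
  have hℓmax : IsLocalMax (fun z => ℓ (f z)) x := by
    filter_upwards [hmax] with z hz
    exact (hℓle _).trans (hz.trans hℓx.ge)
  have hcomp : ℓ.comp f' = 0 := hℓmax.hasFDerivAt_eq_zero (ℓ.hasFDerivAt.comp x hf)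
  by_contra hdet
  obtain ⟨v, hv⟩ := (LinearMap.equivOfDetNeZero _ hdet).surjective (f x)
  have hzero : ℓ (f x) = 0 := by rw [← hv]; exact DFunLike.congr_fun hcomp v
  rw [hℓx] at hzero
  exact hne (norm_eq_zero.1 (by simpa using hzero))

theorem exists_norm_self_add_ne_of_lipschitzWith {g : E → E} {K : ℝ≥0} {R : ℝ} (hR : 0 < R)
    (hg : LipschitzWith K g) (hgR : ∀ x ∉ ball (0 : E) R, g x = 0) :
    ∃ x ∈ ball (0 : E) R, ‖x + g x‖ ≠ R := by
  by_contra! hnorm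
  borelize E
  have hdet : ∀ᵐ x ∂(Measure.addHaar.restrict (ball (0 : E) R)), (1 + fderiv ℝ g x).det = 0 := by
    filter_upwards [ae_restrict_of_ae hg.ae_differentiableAt, ae_restrict_mem measurableSet_ball]
      with x hdiff hx
    refine det_eq_zero_of_isLocalMax_norm ((hasFDerivAt_id x).add hdiff.hasFDerivAt) ?_ ?_
    · filter_upwards [isOpen_ball.mem_nhds hx] with z hz
      exact (hnorm z hz).trans_le (hnorm x hx).ge
    · exact norm_ne_zero_iff.1 ((hnorm x hx).trans_ne hR.ne')
  have hvolume := setIntegral_det_one_add_fderiv Measure.addHaar hg measurableSet_ball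
    measure_ball_lt_top.ne hgR
  rw [integral_eq_zero_of_ae hdet] at hvolume
  exact (ENNReal.toReal_pos (measure_ball_pos _ _ hR).ne' measure_ball_lt_top.ne).ne hvolume

-- Were `x + g x` never zero, `pushOut` would turn it into a retraction of a ball onto its sphere.
theorem exists_add_eq_zero_of_hasCompactSupport {g : E → E} (hg : LocallyLipschitz g)
    (hsupp : HasCompactSupport g) : ∃ x, x + g x = 0 := by
  by_contra! hne
  obtain ⟨C, hC⟩ := hsupp.exists_bound_of_continuous hg.continuous
  have hCnonneg : 0 ≤ C := (norm_nonneg _).trans (hC 0)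
  obtain ⟨S, hS, hsuppS⟩ := hsupp.isBounded.subset_ball_lt 0 (0 : E)
  have hgS (x : E) (hx : S ≤ ‖x‖) : g x = 0 :=
    image_eq_zero_of_notMem_tsupport fun h => (mem_ball_zero_iff.1 (hsuppS h)).not_ge hx
  set R := S + C
  have hR : 0 < R := by positivity
  have hadd : LocallyLipschitz fun x => x + g x := LocallyLipschitz.id.add hg
  obtain ⟨m, hm, hmle⟩ := exists_pos_forall_le_norm_sub (p := 0) hadd.continuous
    (isCompact_closedBall (0 : E) R) (by simpa using fun x _ => hne x)
  have hinside (x : E) (hx : x ∈ ball 0 R) : ‖pushOut 0 m R (x + g x)‖ = R := by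
    rw [mem_ball_zero_iff] at hx
    rw [← sub_zero (pushOut _ _ _ _)]
    refine norm_pushOut_sub hm (hmle x (mem_closedBall_zero_iff.2 hx.le)) ?_
    rw [sub_zero]
    rcases le_total S ‖x‖ with hSx | hxS
    · rw [hgS x hSx, add_zero]; exact hx.le
    · exact (norm_add_le _ _).trans (add_le_add hxS (hC x))
  have houtside (x : E) (hx : x ∉ ball 0 R) : pushOut 0 m R (x + g x) - x = 0 := by
    rw [mem_ball_zero_iff, not_lt] at hx
    rw [hgS x (by linarith), add_zero, pushOut_of_le hR (by simpa using hx), sub_self]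
  have hpush : LocallyLipschitz fun x => pushOut 0 m R (x + g x) - x :=
    ((locallyLipschitz_pushOut 0 hm R).comp hadd).sub .id
  obtain ⟨K, hK⟩ := exists_lipschitzWith_of_hasCompactSupport hpush
    (.intro (isCompact_closedBall 0 R) fun x hx =>
      houtside x fun h => hx (ball_subset_closedBall h))
  obtain ⟨x, hx, hnorm⟩ := exists_norm_self_add_ne_of_lipschitzWith hR hK houtside
  exact hnorm (by rw [add_sub_cancel, hinside x hx])

theorem exists_mem_closedBall_eq_of_norm_sub_le {f : E → E} (hf : LocallyLipschitz f) {c q : E}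
    {R : ℝ} (hR : 0 < R) (hfq : ∀ z ∈ closedBall c R, ‖f z - z‖ + ‖q - c‖ ≤ R) :
    ∃ z ∈ closedBall c R, f z = q := by
  let χ : ContDiffBump (0 : E) := ⟨R, R + 1, hR, by simp⟩
  let h : E → E := fun v => f (c + ballRetraction R v) - q - ballRetraction R v
  have hh (v : E) : ‖h v‖ ≤ R := by
    have hmem : c + ballRetraction R v ∈ closedBall c R := by
      simpa [dist_eq_norm] using norm_ballRetraction_le hR v
    have hsub : h v = (f (c + ballRetraction R v) - (c + ballRetraction R v)) - (q - c) := by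
      simp only [h]; abel
    rw [hsub]
    exact (norm_sub_le _ _).trans (hfq _ hmem)
  have hhlip : LocallyLipschitz h :=
    ((hf.comp ((LocallyLipschitz.const c).add (locallyLipschitz_ballRetraction hR))).sub
      (.const q)).sub (locallyLipschitz_ballRetraction hR)
  obtain ⟨v, hv⟩ := exists_add_eq_zero_of_hasCompactSupport
    (locallyLipschitz_smul (χ.contDiff (n := 1)).locallyLipschitz hhlip)
    χ.hasCompactSupport.smul_right
  have hvR : ‖v‖ ≤ R := by
    rw [eq_neg_of_add_eq_zero_left hv, norm_neg, norm_smul, Real.norm_of_nonneg χ.nonneg]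
    exact (mul_le_of_le_one_left (norm_nonneg _) χ.le_one).trans (hh v)
  refine ⟨c + v, by simpa [dist_eq_norm] using hvR, ?_⟩
  rw [χ.one_of_mem_closedBall (mem_closedBall_zero_iff.2 hvR), one_smul] at hv
  simp only [h, ballRetraction_of_norm_le hR hvR, add_sub_cancel] at hv
  exact sub_eq_zero.1 hv

theorem exists_mem_ball_notMem_image_sphere {Ψ : E → E} {L : ℝ≥0} (hΨ : LipschitzWith L Ψ)
    (p x : E) {δ η : ℝ} (hδ : δ ≠ 0) (hη : 0 < η) : ∃ q ∈ ball x η, q ∉ Ψ '' sphere p δ := by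
  borelize E
  by_contra! hsub
  have hnull : Measure.addHaar (Ψ '' sphere p δ) = 0 :=
    addHaar_image_eq_zero_of_lipschitzOnWith _ hΨ.lipschitzOnWith
      (Measure.addHaar_sphere_of_ne_zero _ p hδ)
  exact (measure_ball_pos Measure.addHaar x hη).ne' (measure_mono_null hsub hnull)

-- If `Φ` missed `p`, then `Ψ ∘ pushOut p m δ ∘ Φ` would still be close to the identity, hence take
-- the value `q ≈ x`. It cannot: only points near `x` could be sent to `q`, and the image of these
-- lies in the null set `Ψ '' sphere p δ`, which `q` is chosen to avoid.
theorem mem_image_closedBall_of_norm_comp_sub_le {Φ Ψ : E → E} {K L : ℝ≥0} {x p : E} {R δ η : ℝ}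
    (hΦ : LipschitzWith K Φ) (hΨ : LipschitzWith L Ψ) (hη : 0 < η)
    (hΨΦ : ∀ z ∈ closedBall x R, ‖Ψ (Φ z) - z‖ ≤ η)
    (hpδ : ‖p - Φ x‖ + 2 * K * η < δ) (hδR : L * δ + 2 * η ≤ R) : p ∈ Φ '' closedBall x R := by
  by_contra hp
  have hδ : 0 < δ := lt_of_le_of_lt (by positivity) hpδ
  have hR : 0 < R := lt_of_lt_of_le (by positivity) hδR
  obtain ⟨m, hm, hmle⟩ := exists_pos_forall_le_norm_sub hΦ.continuous (isCompact_closedBall x R) hp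
  obtain ⟨q, hq, hqδ⟩ := exists_mem_ball_notMem_image_sphere hΨ p x hδ.ne' hη
  rw [mem_ball, dist_eq_norm] at hq
  have hlip : LocallyLipschitz fun z => Ψ (pushOut p m δ (Φ z)) :=
    hΨ.locallyLipschitz.comp ((locallyLipschitz_pushOut p hm δ).comp hΦ.locallyLipschitz)
  obtain ⟨z, hz, hzq⟩ := exists_mem_closedBall_eq_of_norm_sub_le hlip (q := q) hR fun z hz => by
    have hmoved : ‖Ψ (pushOut p m δ (Φ z)) - Ψ (Φ z)‖ ≤ L * δ :=
      (hΨ.norm_sub_le _ _).trans (by gcongr; exact norm_pushOut_sub_self_le hm hδ.le)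
    linarith [norm_sub_le_norm_sub_add_norm_sub (Ψ (pushOut p m δ (Φ z))) (Ψ (Φ z)) z, hΨΦ z hz]
  rcases le_total ‖Φ z - p‖ δ with hnear | hfar
  · exact hqδ ⟨_, mem_sphere_iff_norm.2 (norm_pushOut_sub hm (hmle z hz) hnear), hzq⟩
  · rw [pushOut_of_le hδ hfar] at hzq
    have hzx : ‖z - x‖ ≤ 2 * η := by
      have hqz := hΨΦ z hz
      rw [hzq, norm_sub_rev] at hqz
      linarith [norm_sub_le_norm_sub_add_norm_sub z q x]
    have hΦz : ‖Φ z - Φ x‖ ≤ K * (2 * η) := (hΦ.norm_sub_le z x).trans (by gcongr)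
    linarith [norm_sub_le_norm_sub_add_norm_sub (Φ z) (Φ x) p, norm_sub_rev p (Φ x)]

end Covering

section Density

variable {N : ℕ} {A B : Set (EuclideanSpace ℝ (Fin N))} {x y : EuclideanSpace ℝ (Fin N)}

theorem volume_ball_mul_of_pos (x y : EuclideanSpace ℝ (Fin N)) {C : ℝ} (hC : 0 < C) (r : ℝ) :
    volume (ball x (C * r)) = ENNReal.ofReal (C ^ N) * volume (ball y r) := by
  rw [Measure.addHaar_ball_mul_of_pos volume x hC r, finrank_euclideanSpace_fin,
    Measure.addHaar_ball_center volume y]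

theorem tendsto_const_mul_nhdsGT_zero {C : ℝ} (hC : 0 < C) :
    Tendsto (fun r : ℝ => C * r) (𝓝[>] 0) (𝓝[>] 0) :=
  fun _ hs => eventually_nhdsGT_zero_mul_left hC hs

theorem mem_densityZeroPts_of_eventually_volume_le {C : ℝ} (hC : 0 < C) {M : ℝ≥0∞} (hM : M ≠ ∞)
    (hvol : ∀ᶠ r in 𝓝[>] (0 : ℝ), volume (B ∩ ball y r) ≤ M * volume (A ∩ ball x (C * r)))
    (hx : x ∈ densityZeroPts A) : y ∈ densityZeroPts B := by
  have hlim : Tendsto (fun r => M * ENNReal.ofReal (C ^ N) *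
      (volume (A ∩ ball x (C * r)) / volume (ball x (C * r)))) (𝓝[>] 0) (𝓝 0) := by
    simpa using ENNReal.Tendsto.const_mul (hx.comp (tendsto_const_mul_nhdsGT_zero hC))
      (Or.inr (ENNReal.mul_ne_top hM ENNReal.ofReal_ne_top))
  refine tendsto_of_tendsto_of_tendsto_of_le_of_le' tendsto_const_nhds hlim
    (Eventually.of_forall fun _ => zero_le) ?_
  filter_upwards [hvol] with r hr
  have hCN : ENNReal.ofReal (C ^ N) ≠ 0 := (ENNReal.ofReal_pos.2 (by positivity)).ne'
  calc volume (B ∩ ball y r) / volume (ball y r)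
      ≤ M * volume (A ∩ ball x (C * r)) / volume (ball y r) := by gcongr
    _ = M * ENNReal.ofReal (C ^ N) *
        (volume (A ∩ ball x (C * r)) / volume (ball x (C * r))) := by
      rw [volume_ball_mul_of_pos x y hC, mul_assoc, ← mul_div_assoc (ENNReal.ofReal _),
        ENNReal.mul_div_mul_left _ _ hCN ENNReal.ofReal_ne_top, mul_div_assoc]

theorem mem_densityZeroPts_compl (hA : MeasurableSet A) (hx : x ∈ densityOnePts A) :
    x ∈ densityZeroPts Aᶜ := by
  have hlim : Tendsto (fun r : ℝ => 1 - volume (A ∩ ball x r) / volume (ball x r))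
      (𝓝[>] 0) (𝓝 0) := by
    simpa using ENNReal.Tendsto.sub tendsto_const_nhds hx (Or.inl ENNReal.one_ne_top)
  refine hlim.congr' ?_
  filter_upwards [self_mem_nhdsWithin] with r hr
  have hpos : volume (ball x r) ≠ 0 := (measure_ball_pos volume x hr).ne'
  have hfin : volume (ball x r) ≠ ∞ := measure_ball_lt_top.ne
  have hsplit : volume (A ∩ ball x r) + volume (Aᶜ ∩ ball x r) = volume (ball x r) := by
    simpa [inter_comm, sdiff_eq] using measure_inter_add_sdiff (μ := volume) (ball x r) hA
  have hdiv := congrArg (· / volume (ball x r)) hsplit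
  simp only [ENNReal.add_div, ENNReal.div_self hpos hfin] at hdiv
  rw [← hdiv]
  exact ENNReal.add_sub_cancel_left
    (ENNReal.div_ne_top (measure_ne_top_of_subset inter_subset_right hfin) hpos)

theorem mem_densityOnePts_of_compl (hx : x ∈ densityZeroPts Aᶜ) : x ∈ densityOnePts A := by
  have hlim : Tendsto (fun r : ℝ => 1 - volume (Aᶜ ∩ ball x r) / volume (ball x r))
      (𝓝[>] 0) (𝓝 1) := by
    simpa using ENNReal.Tendsto.sub tendsto_const_nhds hx (Or.inl ENNReal.one_ne_top)
  refine tendsto_of_tendsto_of_tendsto_of_le_of_le' hlim tendsto_const_nhds ?_ ?_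
  · filter_upwards [self_mem_nhdsWithin] with r hr
    rw [tsub_le_iff_right, ← ENNReal.add_div,
      ← ENNReal.div_self (measure_ball_pos volume x hr).ne' measure_ball_lt_top.ne]
    gcongr
    refine (measure_mono ?_).trans (measure_union_le _ _)
    rw [← union_inter_distrib_right, union_compl_self, univ_inter]
  · exact Eventually.of_forall fun r =>
      ENNReal.div_le_of_le_mul (by simpa using measure_mono inter_subset_right)

theorem mem_densityZeroPts_of_notMem_closure_s18 (hx : x ∉ closure A) : x ∈ densityZeroPts A := by
  obtain ⟨ε, hε, hball⟩ := Metric.mem_nhds_iff.1 (isClosed_closure.isOpen_compl.mem_nhds hx)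
  refine tendsto_const_nhds.congr' ?_
  filter_upwards [Ioo_mem_nhdsGT hε] with r hr
  have hempty : A ∩ ball x r = ∅ := by
    ext a
    exact ⟨fun ha => hball (ball_subset_ball hr.2.le ha.2) (subset_closure ha.1), False.elim⟩
  rw [hempty, measure_empty, ENNReal.zero_div]

theorem essBdry_subset_closure : essBdry A ⊆ closure A := fun _ hx =>
  not_not.1 fun hxA => hx (Or.inr (mem_densityZeroPts_of_notMem_closure_s18 hxA))

theorem eventually_forall_exists_dist_lt_of_densityZeroPts_compl (hx : x ∈ densityZeroPts Aᶜ)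
    {ε : ℝ} (hε : 0 < ε) :
    ∀ᶠ R in 𝓝[>] (0 : ℝ), ∀ z ∈ closedBall x R, ∃ a ∈ A, dist a z < ε * R := by
  have hC : 0 < ε / (1 + ε) := by positivity
  have hratio : 0 < ENNReal.ofReal ((ε / (1 + ε)) ^ N) := ENNReal.ofReal_pos.2 (by positivity)
  have hsmall := (hx.comp (tendsto_const_mul_nhdsGT_zero (by positivity : 0 < 1 + ε))).eventually
    (gt_mem_nhds hratio)
  filter_upwards [hsmall, self_mem_nhdsWithin] with R hlt (hR : 0 < R) z hz
  by_contra! hfar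
  have hsub : ball z (ε * R) ⊆ Aᶜ ∩ ball x ((1 + ε) * R) := by
    refine subset_inter (fun a ha haA => (hfar a haA).not_gt ha) (ball_subset_ball' ?_)
    linarith [mem_closedBall.1 hz]
  have hscale : ε * R = ε / (1 + ε) * ((1 + ε) * R) := by field_simp
  rw [Function.comp_apply, ENNReal.div_lt_iff
    (Or.inl (measure_ball_pos volume x (by positivity)).ne') (Or.inl measure_ball_lt_top.ne),
    ← volume_ball_mul_of_pos z x hC, ← hscale] at hlt
  exact (measure_mono hsub).not_gt hlt

end Density

section BiLipschitz

variable {N : ℕ} {A : Set (EuclideanSpace ℝ (Fin N))} {K L : ℝ≥0}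
  {φ ψ : EuclideanSpace ℝ (Fin N) → EuclideanSpace ℝ (Fin N)} {x : EuclideanSpace ℝ (Fin N)}

theorem volume_image_le_of_lipschitzOnWith (hφ : LipschitzOnWith K φ A) :
    volume (φ '' A) ≤ (K : ℝ≥0∞) ^ N * volume A := by
  simpa using addHaar_image_le_of_lipschitzOnWith volume hφ

theorem image_mem_densityZeroPts (hφ : LipschitzOnWith K φ A)
    (hψ : LipschitzOnWith L ψ (φ '' closure A)) (hinv : LeftInvOn ψ φ (closure A))
    (hxA : x ∈ closure A) (hx : x ∈ densityZeroPts A) : φ x ∈ densityZeroPts (φ '' A) := by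
  refine mem_densityZeroPts_of_eventually_volume_le (C := L + 1) (M := (K : ℝ≥0∞) ^ N)
    (by positivity) (ENNReal.pow_ne_top ENNReal.coe_ne_top) ?_ hx
  filter_upwards [self_mem_nhdsWithin] with r (hr : 0 < r)
  refine (measure_mono ?_).trans (volume_image_le_of_lipschitzOnWith (hφ.mono inter_subset_left))
  rintro _ ⟨⟨a, ha, rfl⟩, har⟩
  refine ⟨a, ⟨ha, ?_⟩, rfl⟩
  have haA : a ∈ closure A := subset_closure ha
  rw [mem_ball] at har ⊢
  calc dist a x = dist (ψ (φ a)) (ψ (φ x)) := by rw [hinv haA, hinv hxA]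
    _ ≤ L * dist (φ a) (φ x) :=
      hψ.dist_le_mul _ (mem_image_of_mem φ haA) _ (mem_image_of_mem φ hxA)
    _ ≤ L * r := by gcongr
    _ < (L + 1) * r := by linarith

theorem norm_comp_sub_le_mul_dist {E : Type*} [NormedAddCommGroup E] {Φ Ψ : E → E}
    (hΦ : LipschitzWith K Φ) (hΨ : LipschitzWith L Ψ) {a z : E} (ha : Ψ (Φ a) = a) :
    ‖Ψ (Φ z) - z‖ ≤ (L * K + 1) * dist a z := by
  have hlip := (hΨ.comp hΦ).dist_le_mul z a
  simp only [Function.comp_apply, ha, NNReal.coe_mul, dist_comm z a] at hlip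
  rw [← dist_eq_norm]
  linarith [dist_triangle (Ψ (Φ z)) a z]

theorem eventually_forall_norm_comp_sub_le
    {Φ Ψ : EuclideanSpace ℝ (Fin N) → EuclideanSpace ℝ (Fin N)}
    (hΦ : LipschitzWith K Φ) (hΨ : LipschitzWith L Ψ) (hinv : LeftInvOn Ψ Φ A)
    (hx : x ∈ densityZeroPts Aᶜ) {ε : ℝ} (hε : 0 < ε) :
    ∀ᶠ R in 𝓝[>] (0 : ℝ), ∀ z ∈ closedBall x R, ‖Ψ (Φ z) - z‖ ≤ ε * R := by
  filter_upwards [eventually_forall_exists_dist_lt_of_densityZeroPts_compl hx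
    (by positivity : 0 < ε / (L * K + 1))] with R hnear z hz
  obtain ⟨a, ha, haz⟩ := hnear z hz
  calc ‖Ψ (Φ z) - z‖ ≤ (L * K + 1) * dist a z := norm_comp_sub_le_mul_dist hΦ hΨ (hinv ha)
    _ ≤ (L * K + 1) * (ε / (L * K + 1) * R) := by gcongr
    _ = ε * R := by field_simp

theorem eventually_ball_subset_image_closedBall
    {Φ Ψ : EuclideanSpace ℝ (Fin N) → EuclideanSpace ℝ (Fin N)}
    (hΦ : LipschitzWith K Φ) (hΨ : LipschitzWith L Ψ) (hinv : LeftInvOn Ψ Φ A)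
    (hx : x ∈ densityZeroPts Aᶜ) :
    ∀ᶠ r in 𝓝[>] (0 : ℝ), ball (Φ x) r ⊆ Φ '' closedBall x ((2 * L + 1) * r) := by
  have hclose := (tendsto_const_mul_nhdsGT_zero (by positivity : 0 < 2 * (L : ℝ) + 1)).eventually
    (eventually_forall_norm_comp_sub_le hΦ hΨ hinv hx
      (by positivity : 0 < 1 / (2 * (K + 1) * (2 * L + 1) : ℝ)))
  filter_upwards [hclose, self_mem_nhdsWithin] with r hr (hr0 : 0 < r) p hp
  have hη : 1 / (2 * (K + 1) * (2 * L + 1)) * ((2 * L + 1) * r) = r / (2 * (K + 1)) := by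
    field_simp
  rw [hη] at hr
  have hηr : r / (2 * (K + 1)) ≤ r / 2 := by gcongr; simp
  have hKη : 2 * K * (r / (2 * (K + 1))) ≤ r := by
    rw [← mul_div_assoc, div_le_iff₀ (by positivity)]; nlinarith
  rw [mem_ball, dist_eq_norm] at hp
  exact mem_image_closedBall_of_norm_comp_sub_le (δ := 2 * r) hΦ hΨ (by positivity) hr
    (by linarith) (by linarith)

theorem mem_densityZeroPts_compl_image
    {Φ Ψ : EuclideanSpace ℝ (Fin N) → EuclideanSpace ℝ (Fin N)}
    (hΦ : LipschitzWith K Φ) (hΨ : LipschitzWith L Ψ) (hinv : LeftInvOn Ψ Φ A)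
    (hx : x ∈ densityZeroPts Aᶜ) : Φ x ∈ densityZeroPts (Φ '' A)ᶜ := by
  refine mem_densityZeroPts_of_eventually_volume_le (C := 2 * L + 2) (M := (K : ℝ≥0∞) ^ N)
    (by positivity) (ENNReal.pow_ne_top ENNReal.coe_ne_top) ?_ hx
  filter_upwards [eventually_ball_subset_image_closedBall hΦ hΨ hinv hx, self_mem_nhdsWithin]
    with r hcover (hr : 0 < r)
  refine (measure_mono ?_).trans (volume_image_le_of_lipschitzOnWith hΦ.lipschitzOnWith)
  rintro p ⟨hpA, hpr⟩
  obtain ⟨z, hz, rfl⟩ := hcover hpr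
  exact ⟨z, ⟨fun hzA => hpA (mem_image_of_mem Φ hzA),
    closedBall_subset_ball (by linarith) hz⟩, rfl⟩

theorem image_mem_densityOnePts (hA : MeasurableSet A) (hφ : LipschitzOnWith K φ (closure A))
    (hψ : LipschitzOnWith L ψ (φ '' closure A)) (hinv : LeftInvOn ψ φ (closure A))
    (hxA : x ∈ closure A) (hx : x ∈ densityOnePts A) : φ x ∈ densityOnePts (φ '' A) := by
  obtain ⟨Φ, hΦ, hΦφ⟩ := hφ.extend_finite_dimension
  obtain ⟨Ψ, hΨ, hΨψ⟩ := hψ.extend_finite_dimension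
  have hinvA : LeftInvOn Ψ Φ A := fun a ha => by
    have haA : a ∈ closure A := subset_closure ha
    rw [← hΦφ haA, ← hΨψ (mem_image_of_mem φ haA), hinv haA]
  rw [hΦφ hxA, (hΦφ.mono subset_closure).image_eq]
  exact mem_densityOnePts_of_compl
    (mem_densityZeroPts_compl_image hΦ hΨ hinvA (mem_densityZeroPts_compl hA hx))

theorem closure_image_eq_image_closure {X Y : Type*} [PseudoEMetricSpace X] [CompleteSpace X]
    [EMetricSpace Y] {A : Set X} {φ : X → Y} {ψ : Y → X} (hφ : LipschitzOnWith K φ (closure A))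
    (hψ : LipschitzOnWith L ψ (φ '' closure A)) (hinv : LeftInvOn ψ φ (closure A)) :
    closure (φ '' A) = φ '' closure A := by
  have hanti : AntilipschitzWith L ((closure A).domRestrict φ) := fun a b => by
    simpa [hinv a.2, hinv b.2, Subtype.edist_eq] using
      hψ (mem_image_of_mem φ a.2) (mem_image_of_mem φ b.2)
  have hclosed : IsClosed (φ '' closure A) := by
    have := (isClosed_closure (s := A)).completeSpace_coe
    rw [← range_domRestrict]
    exact hanti.isClosed_range (lipschitzOnWith_iff_restrict.1 hφ).uniformContinuous
  exact (closure_minimal (image_mono subset_closure) hclosed).antisymm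
    hφ.continuousOn.image_closure

theorem image_mem_essBdry_iff (hA : MeasurableSet A) (hφ : LipschitzOnWith K φ (closure A))
    (hψ : LipschitzOnWith L ψ (φ '' closure A)) (hinv : LeftInvOn ψ φ (closure A))
    (hxA : x ∈ closure A) : φ x ∈ essBdry (φ '' A) ↔ x ∈ essBdry A := by
  have hclosure : closure (φ '' A) = φ '' closure A := closure_image_eq_image_closure hφ hψ hinv
  have himage : ψ '' (φ '' A) = A := (hinv.mono subset_closure).image_image
  have hA' : MeasurableSet (φ '' A) := hA.image_of_continuousOn_injOn
    (hφ.continuousOn.mono subset_closure) (hinv.injOn.mono subset_closure)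
  have hψ' : LipschitzOnWith L ψ (closure (φ '' A)) := by rwa [hclosure]
  have hφ' : LipschitzOnWith K φ (ψ '' closure (φ '' A)) := by rwa [hclosure, hinv.image_image]
  have hinv' : LeftInvOn φ ψ (closure (φ '' A)) := by
    rw [hclosure]
    rintro _ ⟨a, ha, rfl⟩
    rw [hinv ha]
  have hφx : φ x ∈ closure (φ '' A) := hclosure ▸ mem_image_of_mem φ hxA
  have hone : φ x ∈ densityOnePts (φ '' A) ↔ x ∈ densityOnePts A := by
    refine ⟨fun h => ?_, image_mem_densityOnePts hA hφ hψ hinv hxA⟩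
    simpa only [himage, hinv hxA] using image_mem_densityOnePts hA' hψ' hφ' hinv' hφx h
  have hzero : φ x ∈ densityZeroPts (φ '' A) ↔ x ∈ densityZeroPts A := by
    refine ⟨fun h => ?_, image_mem_densityZeroPts (hφ.mono subset_closure) hψ hinv hxA⟩
    simpa only [himage, hinv hxA] using
      image_mem_densityZeroPts (hψ'.mono subset_closure) hφ' hinv' hφx h
  simp only [essBdry, mem_compl_iff, mem_union, hone, hzero]

theorem stmt_18_general (hA : MeasurableSet A) (hφ : LipschitzOnWith K φ (closure A))
    (hψ : LipschitzOnWith L ψ (φ '' closure A)) (hinv : LeftInvOn ψ φ (closure A)) :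
    essBdry (φ '' A) = φ '' essBdry A := by
  ext y
  constructor
  · intro hy
    obtain ⟨x, hx, rfl⟩ :=
      (closure_image_eq_image_closure hφ hψ hinv).subset (essBdry_subset_closure hy)
    exact ⟨x, (image_mem_essBdry_iff hA hφ hψ hinv hx).1 hy, rfl⟩
  · rintro ⟨x, hx, rfl⟩
    exact (image_mem_essBdry_iff hA hφ hψ hinv (essBdry_subset_closure hx)).2 hx

end BiLipschitz

theorem stmt_18 {N : ℕ} (G F : Set (EuclideanSpace ℝ (Fin N)))
    (φ ψ : EuclideanSpace ℝ (Fin N) → EuclideanSpace ℝ (Fin N)) (Kφ Kψ : ℝ≥0)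
    (hφ : LipschitzOnWith Kφ φ G) (hψ : LipschitzOnWith Kψ ψ F)
    (hbij : Set.BijOn φ G F) (hinv : Set.InvOn ψ φ G F)
    (A : Set (EuclideanSpace ℝ (Fin N))) (hA : MeasurableSet A)
    (hAG : closure A ⊆ G) (hAc : IsCompact (closure A))
    (hper : perim A Set.univ < ⊤) :
    essBdry (φ '' A) = φ '' essBdry A :=
  stmt_18_general hA (hφ.mono hAG)
    (hψ.mono (hbij.image_eq ▸ image_mono hAG)) (hinv.1.mono hAG)

end
end
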